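/- There exists an absolute constant c > 0 with the following property. Let K ⊂ ℝ² be a convex body, let s(K) be its Santaló point, and let ε > 0 be such that the Banach–Mazur distance of K from ellipses is at least 1 + ε, that is, there are no invertible linear map T : ℝ² → ℝ², vector a ∈ ℝ², and λ ∈ [1, 1+ε) with T(B²) + a ⊆ K ⊆ λ·T(B²) + a. Then V(K)·V((K − s(K))*) ≤ π²·(1 − c·ε⁶). -/

import Mathlib

/-!
The polar of `K` with respect to the Santaló point is the smallest one, so it suffices to bound the
volume product with respect to some other interior point `z`. Take for `z` the intersection of two
lines that cut `K` into four parts of equal area (`exists_quartering`). After an affine map these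
lines are the coordinate axes, each quadrant of `K` has area `π / 4`, and the task is to show that
the polar has area at most `π`, and that near-equality makes `K` close to an ellipse.

In one quadrant, let `f` and `k` be the gauges of `K` and of its polar on the line `x = 1`, as
functions of the slope. Then `1 + p * s ≤ f p * k s`, and the areas are half the integrals of
`1 / f ^ 2` and `1 / k ^ 2`. If slopes `p` and `S p` are matched so that they cut off equal
proportions of the two areas, the function `m p = √(p * S p)` satisfies `S' ≤ m' ^ 2`, and comparing
with `arctan (m p)` shows that the product of the two areas is at most `π ^ 2 / 16`. The identity
`m' ^ 2 - S' = (m' - m / p) ^ 2` turns the deficit `δ` into a bound of order `√δ` for the distance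
of `m`, on the scale of angles, from a linear function, so that the areas of the sectors of `K`
agree with those of an ellipse `x ^ 2 / ρ + ρ * y ^ 2 ≤ 1` up to order `√δ`
(`IsMeanSlope.exists_abs_integral_sub_arctan_le`).

By convexity, closeness of sector areas up to order `Δ ^ 2` gives uniform closeness of the gauges up
to order `Δ`; at the axes, convexity of the gauge across the axis is used, which also forces the
parameters `ρ` of adjacent quadrants to agree up to a factor `1 - O(Δ)`
(`SectorClose.half_plane_bounds`). With `δ` of order `ε ^ 6` and `Δ` of order `ε`, the condition
`√δ ≪ Δ ^ 2` holds for bounded `ε`, and `K` lies between an ellipse and a dilate of it by a factor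
less than `1 + ε`. Large `ε` do not occur, since every planar convex body lies between an ellipse
and its 12-fold dilate (`betweenEllipses_twelve`).
-/

open MeasureTheory Real
open scoped Pointwise RealInnerProductSpace ENNReal

noncomputable section

/-- The polar body of the translate K − z:
`(K − z)* = {y : ⟪x − z, y⟫ ≤ 1 for all x ∈ K}`. -/
def translatePolar {d : ℕ} (K : Set (EuclideanSpace ℝ (Fin d)))
    (z : EuclideanSpace ℝ (Fin d)) : Set (EuclideanSpace ℝ (Fin d)) :=
  {y | ∀ x ∈ K, ⟪x - z, y⟫ ≤ 1}

/-- s is the Santaló point of K: it lies in the interior of K and minimizes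
the volume of the polar of the corresponding translate. -/
def IsSantaloPoint {d : ℕ} (K : Set (EuclideanSpace ℝ (Fin d)))
    (s : EuclideanSpace ℝ (Fin d)) : Prop :=
  s ∈ interior K ∧
    ∀ z ∈ interior K, volume (translatePolar K s) ≤ volume (translatePolar K z)

/-- κ_d, the volume of the d-dimensional Euclidean unit ball, as a real number. -/
def kappa (d : ℕ) : ℝ :=
  (volume (Metric.closedBall (0 : EuclideanSpace ℝ (Fin d)) 1)).toReal

abbrev E2 := EuclideanSpace ℝ (Fin 2)

section

open Set Filter Topology

/-! ### Matching slopes by area -/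

section Transport

variable {u v : ℝ → ℝ}

theorem integral_Ioi_pos (hu0 : ∀ t, 0 < u t) (hui : IntegrableOn u (Ioi 0)) :
    0 < ∫ t in Ioi 0, u t := by
  rw [setIntegral_pos_iff_support_of_nonneg_ae (Eventually.of_forall fun t => (hu0 t).le) hui,
    Function.support_eq_univ fun t => (hu0 t).ne', univ_inter, Real.volume_Ioi]
  exact ENNReal.zero_lt_top

theorem intervalIntegral_mem_Ioo (hu : Continuous u) (hu0 : ∀ t, 0 < u t)
    (hui : IntegrableOn u (Ioi 0)) {p : ℝ} (hp : 0 < p) :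
    ∫ t in 0..p, u t ∈ Ioo 0 (∫ t in Ioi 0, u t) := by
  have hmono : StrictMono fun p => ∫ t in 0..p, u t :=
    strictMono_of_hasDerivAt_pos (fun p => (hu.integral_hasStrictDerivAt 0 p).hasDerivAt) hu0
  have hlim := intervalIntegral_tendsto_integral_Ioi 0 hui tendsto_id
  exact ⟨intervalIntegral.intervalIntegral_pos_of_pos (hu.intervalIntegrable 0 p) hu0 hp,
    (hmono (lt_add_one p)).trans_le (hmono.monotone.ge_of_tendsto hlim _)⟩

theorem Ioo_subset_image_intervalIntegral (hu : Continuous u) (hui : IntegrableOn u (Ioi 0)) :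
    Ioo 0 (∫ t in Ioi 0, u t) ⊆ (fun p => ∫ t in 0..p, u t) '' Ioi 0 := by
  have hcont : Continuous fun p => ∫ t in 0..p, u t :=
    intervalIntegral.continuous_primitive (fun _ _ => hu.intervalIntegrable _ _) 0
  refine (convex_Ioi (0 : ℝ)).isPreconnected.intermediate_value_Ioo (l₁ := 𝓝[>] 0) (l₂ := atTop)
    inf_le_right (le_principal_iff.2 (Ioi_mem_atTop 0)) hcont.continuousOn ?_
    (intervalIntegral_tendsto_integral_Ioi 0 hui tendsto_id)
  simpa using (hcont.tendsto 0).mono_left nhdsWithin_le_nhds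

/-- `S` is chosen so that `∫ t in 0..S p, v t` is proportional to `∫ t in 0..p, u t`. -/
theorem exists_transport_map (hu : Continuous u) (hv : Continuous v) (hu0 : ∀ t, 0 < u t)
    (hv0 : ∀ t, 0 < v t) (hui : IntegrableOn u (Ioi 0)) (hvi : IntegrableOn v (Ioi 0)) :
    ∃ S : ℝ → ℝ, (∀ p, 0 < p → 0 < S p) ∧ ∀ p, 0 < p →
      HasDerivAt S ((∫ t in Ioi 0, v t) / (∫ t in Ioi 0, u t) * u p / v (S p)) p := by
  set α := ∫ t in Ioi 0, u t
  set β := ∫ t in Ioi 0, v t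
  have hα : 0 < α := integral_Ioi_pos hu0 hui
  have hβ : 0 < β := integral_Ioi_pos hv0 hvi
  let F : ℝ → ℝ := fun p => ∫ t in 0..p, u t
  let G : ℝ → ℝ := fun p => ∫ t in 0..p, v t
  have hG (p : ℝ) : HasStrictDerivAt G (v p) p := hv.integral_hasStrictDerivAt 0 p
  have hmono : StrictMono G := strictMono_of_hasDerivAt_pos (fun p => (hG p).hasDerivAt) hv0
  have hemb : IsOpenEmbedding G := .of_continuous_injective_isOpenMap
    (continuous_iff_continuousAt.2 fun p => (hG p).hasDerivAt.continuousAt) hmono.injective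
    (isOpenMap_of_hasStrictDerivAt hG fun p => (hv0 p).ne')
  let e := hemb.toOpenPartialHomeomorph G
  have hmem {p : ℝ} (hp : 0 < p) : ∃ s, 0 < s ∧ G s = β / α * F p := by
    obtain ⟨h0, h1⟩ := intervalIntegral_mem_Ioo hu hu0 hui hp
    refine Ioo_subset_image_intervalIntegral hv hvi ⟨mul_pos (div_pos hβ hα) h0, ?_⟩
    rw [div_mul_eq_mul_div, div_lt_iff₀ hα]
    exact mul_lt_mul_of_pos_left h1 hβ
  refine ⟨fun p => e.symm (β / α * F p), fun p hp => ?_, fun p hp => ?_⟩ <;>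
    obtain ⟨s, hs, hGs⟩ := hmem hp
  · change 0 < e.symm (β / α * F p)
    rw [← hGs]
    exact (e.left_inv (mem_univ s)).symm ▸ hs
  · have htarget : β / α * F p ∈ e.target := hGs ▸ e.map_source (mem_univ s)
    refine ((e.hasDerivAt_symm htarget (hv0 _).ne' (hG _).hasDerivAt).comp p
      ((hu.integral_hasStrictDerivAt 0 p).hasDerivAt.const_mul (β / α))).congr_deriv ?_
    exact (div_eq_inv_mul _ _).symm

end Transport

/-! ### Stability of the sector inequality -/

/-- `m` plays the role of the geometric mean `√(p * S p)` of two slopes matched by area, `m'` is its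
derivative and `w` the normalized area density. Since `S' = m' ^ 2 - (m' - m / p) ^ 2`, the last
field is the infinitesimal form `w p * (1 + p * S p) ≤ √(S' p)` of polarity. -/
structure IsMeanSlope (w m m' : ℝ → ℝ) : Prop where
  pos : ∀ p, 0 < p → 0 < m p
  deriv_pos : ∀ p, 0 < p → 0 < m' p
  hasDerivAt : ∀ p, 0 < p → HasDerivAt m (m' p) p
  weight_nonneg : ∀ p, 0 ≤ w p
  sq_weight_le : ∀ p, 0 < p → (w p * (1 + m p ^ 2)) ^ 2 ≤ m' p ^ 2 - (m' p - m p / p) ^ 2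

theorem isMeanSlope_sqrt_mul {w q S : ℝ → ℝ} (hS0 : ∀ p, 0 < p → 0 < S p)
    (hSd : ∀ p, 0 < p → HasDerivAt S (q p ^ 2) p) (hw0 : ∀ p, 0 ≤ w p)
    (hw : ∀ p, 0 < p → w p * (1 + p * S p) ≤ q p) :
    IsMeanSlope w (fun p => √(p * S p)) fun p => (S p + p * q p ^ 2) / (2 * √(p * S p)) where
  pos p hp := Real.sqrt_pos.2 (mul_pos hp (hS0 p hp))
  deriv_pos p hp := by
    have := hS0 p hp
    positivity
  hasDerivAt p hp := by
    have := ((hasDerivAt_id p).mul (hSd p hp)).sqrt (mul_pos hp (hS0 p hp)).ne'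
    rwa [one_mul] at this
  weight_nonneg := hw0
  sq_weight_le p hp := by
    have hS := hS0 p hp
    set m := √(p * S p)
    have hm0 : 0 < m := Real.sqrt_pos.2 (mul_pos hp hS)
    have hm : m ^ 2 = p * S p := Real.sq_sqrt (mul_pos hp hS).le
    have key : ((S p + p * q p ^ 2) / (2 * m)) ^ 2 - ((S p + p * q p ^ 2) / (2 * m) - m / p) ^ 2
        = q p ^ 2 := by
      have hSm : S p = m ^ 2 / p := by rw [hm, mul_div_cancel_left₀ _ hp.ne']
      rw [hSm]
      field_simp
      ring
    rw [key, hm]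
    exact pow_le_pow_left₀ (mul_nonneg (hw0 p) (by positivity)) (hw p hp) 2

/-- If the slopes `p` and `S p` are matched by area, then `1 + p * s ≤ f p * k s` at `s = S p` makes
`√(p * S p)` a mean slope. -/
theorem exists_isMeanSlope {f k : ℝ → ℝ} (hf : Continuous f) (hk : Continuous k)
    (hf0 : ∀ t, 0 < f t) (hk0 : ∀ t, 0 < k t)
    (hfk : ∀ p s, 0 < p → 0 < s → 1 + p * s ≤ f p * k s)
    (hfi : IntegrableOn (fun t => (f t ^ 2)⁻¹) (Ioi 0))
    (hki : IntegrableOn (fun t => (k t ^ 2)⁻¹) (Ioi 0)) :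
    ∃ m m', IsMeanSlope (fun p => √((∫ t in Ioi 0, (k t ^ 2)⁻¹) / ∫ t in Ioi 0, (f t ^ 2)⁻¹) *
      (f p ^ 2)⁻¹) m m' := by
  have hcont {f : ℝ → ℝ} (hf : Continuous f) (hf0 : ∀ t, 0 < f t) :
      Continuous fun t => (f t ^ 2)⁻¹ := (hf.pow 2).inv₀ fun t => (pow_pos (hf0 t) 2).ne'
  have hpos {f : ℝ → ℝ} (hf0 : ∀ t, 0 < f t) (t : ℝ) : 0 < (f t ^ 2)⁻¹ :=
    inv_pos.2 (pow_pos (hf0 t) 2)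
  obtain ⟨S, hS0, hSd⟩ := exists_transport_map (hcont hf hf0) (hcont hk hk0) (hpos hf0) (hpos hk0)
    hfi hki
  have hα := integral_Ioi_pos (hpos hf0) hfi
  have hβ := integral_Ioi_pos (hpos hk0) hki
  set c := √((∫ t in Ioi 0, (k t ^ 2)⁻¹) / ∫ t in Ioi 0, (f t ^ 2)⁻¹) with hc
  refine ⟨_, _, isMeanSlope_sqrt_mul (q := fun p => c * k (S p) / f p) hS0 (fun p hp => ?_)
    (fun p => by positivity) fun p hp => ?_⟩
  · refine (hSd p hp).congr_deriv ?_
    rw [div_pow, mul_pow, hc, Real.sq_sqrt (div_pos hβ hα).le, div_inv_eq_mul]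
    ring
  · have := hf0 p
    calc c * (f p ^ 2)⁻¹ * (1 + p * S p)
        ≤ c * (f p ^ 2)⁻¹ * (f p * k (S p)) := by gcongr; exact hfk p _ hp (hS0 p hp)
      _ = c * k (S p) / f p := by field_simp

theorem monotoneOn_Ioi_of_hasDerivAt_nonneg {u u' : ℝ → ℝ} {a : ℝ}
    (hu : ∀ p, a < p → HasDerivAt u (u' p) p) (hu0 : ∀ p, a < p → 0 ≤ u' p) :
    MonotoneOn u (Ioi a) := by
  refine monotoneOn_of_hasDerivWithinAt_nonneg (convex_Ioi a)
    (fun p hp => (hu p hp).continuousAt.continuousWithinAt) (f' := u') ?_ ?_ <;>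
    rw [interior_Ioi]
  exacts [fun p hp => (hu p hp).hasDerivWithinAt, hu0]

theorem abs_sub_le_of_abs_deriv_le {G G' B B' : ℝ → ℝ} {a b : ℝ} (hab : a ≤ b)
    (hG : ∀ s ∈ Icc a b, HasDerivAt G (G' s) s) (hB : ∀ s ∈ Icc a b, HasDerivAt B (B' s) s)
    (h : ∀ s ∈ Icc a b, |G' s| ≤ B' s) : |G b - G a| ≤ B b - B a := by
  refine image_norm_le_of_norm_deriv_right_le_deriv_boundary' (f := fun s => G s - G a)
    (B := fun s => B s - B a) (f' := G') (B' := B') (fun s hs => ?_) (fun s hs => ?_) (by simp)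
    (fun s hs => ?_) (fun s hs => ?_) (fun s hs => h s (Ico_subset_Icc_self hs))
    (right_mem_Icc.2 hab)
  · exact ((hG s hs).sub_const _).continuousAt.continuousWithinAt
  · exact ((hG s (Ico_subset_Icc_self hs)).sub_const _).hasDerivWithinAt
  · exact ((hB s hs).sub_const _).continuousAt.continuousWithinAt
  · exact ((hB s (Ico_subset_Icc_self hs)).sub_const _).hasDerivWithinAt

namespace IsMeanSlope

variable {w m m' : ℝ → ℝ}

theorem monotoneOn (h : IsMeanSlope w m m') : MonotoneOn m (Ioi 0) :=
  monotoneOn_Ioi_of_hasDerivAt_nonneg h.hasDerivAt fun p hp => (h.deriv_pos p hp).le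

theorem monotoneOn_sq_div (h : IsMeanSlope w m m') : MonotoneOn (fun p => m p ^ 2 / p) (Ioi 0) := by
  refine monotoneOn_Ioi_of_hasDerivAt_nonneg
    (u' := fun p => m' p ^ 2 - (m' p - m p / p) ^ 2)
    (fun p hp => (((h.hasDerivAt p hp).pow 2).div (hasDerivAt_id p) hp.ne').congr_deriv ?_)
    fun p hp => (sq_nonneg _).trans (h.sq_weight_le p hp)
  simp only [Pi.pow_apply, id, Nat.cast_ofNat]
  field_simp
  ring

theorem exists_eq_one (h : IsMeanSlope w m m') : ∃ p, 0 < p ∧ m p = 1 := by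
  have hm1 : 0 < m 1 ^ 2 := pow_pos (h.pos 1 one_pos) 2
  set a := min 1 (m 1 ^ 2)⁻¹
  set b := max 1 (m 1 ^ 2)⁻¹
  have ha : 0 < a := lt_min one_pos (inv_pos.2 hm1)
  have hb : 0 < b := one_pos.trans_le (le_max_left _ _)
  have hcont : ContinuousOn m (Icc a b) := fun p hp =>
    (h.hasDerivAt p (ha.trans_le hp.1)).continuousAt.continuousWithinAt
  have hma : m a ≤ 1 := by
    have : m a ^ 2 / a ≤ m 1 ^ 2 / 1 := h.monotoneOn_sq_div ha (mem_Ioi.2 one_pos) (min_le_left _ _)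
    rw [div_one, div_le_iff₀ ha] at this
    rw [← sq_le_one_iff₀ (h.pos a ha).le]
    exact this.trans ((mul_le_mul_of_nonneg_left (min_le_right _ _) hm1.le).trans_eq
      (mul_inv_cancel₀ hm1.ne'))
  have hmb : 1 ≤ m b := by
    have : m 1 ^ 2 / 1 ≤ m b ^ 2 / b := h.monotoneOn_sq_div (mem_Ioi.2 one_pos) hb (le_max_left _ _)
    rw [div_one, le_div_iff₀ hb] at this
    rw [← one_le_sq_iff₀ (h.pos b hb).le]
    exact ((mul_inv_cancel₀ hm1.ne').symm.trans_le
      (mul_le_mul_of_nonneg_left (le_max_right _ _) hm1.le)).trans this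
  obtain ⟨p, hp, hmp⟩ := intermediate_value_Icc min_le_max hcont ⟨hma, hmb⟩
  exact ⟨p, ha.trans_le hp.1, hmp⟩

theorem hasDerivAt_arctan (h : IsMeanSlope w m m') {p : ℝ} (hp : 0 < p) :
    HasDerivAt (fun p => arctan (m p)) (m' p / (1 + m p ^ 2)) p := by
  convert (h.hasDerivAt p hp).arctan using 1
  ring

theorem weight_mul_le (h : IsMeanSlope w m m') {p : ℝ} (hp : 0 < p) :
    w p * (1 + m p ^ 2) ≤ m' p :=
  le_of_sq_le_sq ((h.sq_weight_le p hp).trans (sub_le_self _ (sq_nonneg _))) (h.deriv_pos p hp).le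

theorem hasDerivAt_deficit (h : IsMeanSlope w m m') (hw : Continuous w) {p : ℝ} (hp : 0 < p) :
    HasDerivAt (fun p => arctan (m p) - ∫ t in 0..p, w t) (m' p / (1 + m p ^ 2) - w p) p :=
  (h.hasDerivAt_arctan hp).sub (hw.integral_hasStrictDerivAt 0 p).hasDerivAt

theorem monotoneOn_deficit (h : IsMeanSlope w m m') (hw : Continuous w) :
    MonotoneOn (fun p => arctan (m p) - ∫ t in 0..p, w t) (Ioi 0) := by
  refine monotoneOn_Ioi_of_hasDerivAt_nonneg (fun p hp => h.hasDerivAt_deficit hw hp) fun p hp => ?_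
  rw [sub_nonneg, le_div_iff₀ (by positivity)]
  exact h.weight_mul_le hp

theorem deficit_nonneg (h : IsMeanSlope w m m') (hw : Continuous w) {p : ℝ} (hp : 0 < p) :
    0 ≤ arctan (m p) - ∫ t in 0..p, w t := by
  have hlim : Tendsto (fun r => -∫ t in 0..r, w t) (𝓝[>] 0) (𝓝 0) := by
    simpa using ((hw.integral_hasStrictDerivAt 0 0).hasDerivAt.continuousAt.tendsto.neg).mono_left
      nhdsWithin_le_nhds
  refine le_of_tendsto hlim ?_
  filter_upwards [Ioo_mem_nhdsGT hp] with r hr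
  have := h.monotoneOn_deficit hw hr.1 hp hr.2.le
  linarith [arctan_pos.2 (h.pos r hr.1)]

theorem deficit_le (h : IsMeanSlope w m m') (hw : Continuous w) (hwi : IntegrableOn w (Ioi 0))
    {p : ℝ} (hp : 0 < p) : arctan (m p) - ∫ t in 0..p, w t ≤ π / 2 - ∫ t in Ioi 0, w t := by
  refine ge_of_tendsto (tendsto_const_nhds.sub
    (intervalIntegral_tendsto_integral_Ioi 0 hwi tendsto_id)) ?_
  filter_upwards [eventually_ge_atTop p] with r hr
  have := h.monotoneOn_deficit hw hp (hp.trans_le hr : 0 < r) hr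
  linarith [arctan_lt_pi_div_two (m r), show ∫ t in 0..id r, w t = ∫ t in 0..r, w t from rfl]

theorem integral_weight_le (h : IsMeanSlope w m m') (hw : Continuous w)
    (hwi : IntegrableOn w (Ioi 0)) : ∫ t in Ioi 0, w t ≤ π / 2 :=
  sub_nonneg.1 ((h.deficit_nonneg hw one_pos).trans (h.deficit_le hw hwi one_pos))

/-- Cauchy–Schwarz in differential form: the left side is at most the geometric mean of the
derivatives of `2 * deficit` and of `arctan m`, hence at most a weighted arithmetic mean. -/
theorem abs_deriv_sub_div_le (h : IsMeanSlope w m m') {l p : ℝ} (hl : 0 < l) (hp : 0 < p) :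
    |m' p - m p / p| / (1 + m p ^ 2) ≤
      l * (m' p / (1 + m p ^ 2) - w p) + m' p / (1 + m p ^ 2) / (2 * l) := by
  have hm : 0 < 1 + m p ^ 2 := by positivity
  have hm' := h.deriv_pos p hp
  set q := w p * (1 + m p ^ 2) with hq
  have hq0 : 0 ≤ q := mul_nonneg (h.weight_nonneg p) hm.le
  have hqm : q ≤ m' p := h.weight_mul_le hp
  have hnum : |m' p - m p / p| ≤ l * (m' p - q) + m' p / (2 * l) := by
    have hA : 0 ≤ l * (m' p - q) := mul_nonneg hl.le (sub_nonneg.2 hqm)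
    have hAB : (l * (m' p - q)) * (m' p / (2 * l)) = (m' p - q) * m' p / 2 := by field_simp
    refine abs_le_of_sq_le_sq ?_ (add_nonneg hA (by positivity))
    nlinarith [sq_nonneg (l * (m' p - q) - m' p / (2 * l)), h.sq_weight_le p hp]
  calc |m' p - m p / p| / (1 + m p ^ 2)
      ≤ (l * (m' p - q) + m' p / (2 * l)) / (1 + m p ^ 2) := by gcongr
    _ = _ := by rw [hq]; field_simp

/-- Between `p` and the point `p₀` where the mean slope is one, freezing the outer slope `p` and
letting only the ratio `m s / s` vary costs nothing. -/
theorem abs_deriv_arctan_mul_ratio_le (h : IsMeanSlope w m m') {p p₀ s : ℝ} (hp : 0 < p)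
    (hp₀ : 0 < p₀) (hm : m p₀ = 1) (hs : s ∈ uIcc p p₀) :
    |1 / (1 + (p * (m s / s)) ^ 2) * (p * ((m' s * s - m s * 1) / s ^ 2))| ≤
      |m' s - m s / s| / (1 + m s ^ 2) := by
  have hs0 : 0 < s := (lt_min hp hp₀).trans_le hs.1
  have hms := h.pos s hs0
  have hsign : 0 ≤ (s - p) * (1 - m s ^ 2 * (p / s)) := by
    rcases mem_uIcc.1 hs with ⟨hps, hsp⟩ | ⟨hps, hsp⟩
    · have hm1 : m s ≤ 1 := hm ▸ h.monotoneOn hs0 hp₀ hsp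
      exact mul_nonneg (sub_nonneg.2 hps) (sub_nonneg.2 (mul_le_one₀ (pow_le_one₀ hms.le hm1)
        (by positivity) ((div_le_one hs0).2 hps)))
    · have hm1 : 1 ≤ m s := hm ▸ h.monotoneOn hp₀ hs0 hps
      exact mul_nonneg_of_nonpos_of_nonpos (sub_nonpos.2 hsp) (sub_nonpos.2
        (one_le_mul_of_one_le_of_one_le (one_le_pow₀ hm1) ((one_le_div hs0).2 hsp)))
  have hfactor : p / s / (1 + (p * (m s / s)) ^ 2) ≤ 1 / (1 + m s ^ 2) := by
    have hdiff : s * (1 + (p * (m s / s)) ^ 2) - p * (1 + m s ^ 2)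
        = (s - p) * (1 - m s ^ 2 * (p / s)) := by field_simp; ring
    rw [div_div, div_le_div_iff₀ (by positivity) (by positivity)]
    linarith
  calc |1 / (1 + (p * (m s / s)) ^ 2) * (p * ((m' s * s - m s * 1) / s ^ 2))|
      = |p / s / (1 + (p * (m s / s)) ^ 2) * (m' s - m s / s)| := by congr 1; field_simp
    _ = p / s / (1 + (p * (m s / s)) ^ 2) * |m' s - m s / s| := by
        rw [abs_mul, abs_of_pos (by positivity)]
    _ ≤ 1 / (1 + m s ^ 2) * |m' s - m s / s| := by gcongr
    _ = |m' s - m s / s| / (1 + m s ^ 2) := by ring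

theorem abs_arctan_sub_arctan_le (h : IsMeanSlope w m m') (hw : Continuous w)
    (hwi : IntegrableOn w (Ioi 0)) {l p p₀ : ℝ} (hl : 0 < l) (hp : 0 < p) (hp₀ : 0 < p₀)
    (hm : m p₀ = 1) : |arctan (m p) - arctan (1 / p₀ * p)| ≤
      l * (π / 2 - ∫ t in Ioi 0, w t) + π / 2 / (2 * l) := by
  set B : ℝ → ℝ := fun s => l * (arctan (m s) - ∫ t in 0..s, w t) + arctan (m s) / (2 * l) with hB
  set G : ℝ → ℝ := fun s => arctan (p * (m s / s)) with hG
  have hBd {s : ℝ} (hs : 0 < s) :=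
    ((h.hasDerivAt_deficit hw hs).const_mul l).add ((h.hasDerivAt_arctan hs).div_const (2 * l))
  have hGd {s : ℝ} (hs : 0 < s) :=
    (((h.hasDerivAt s hs).div (hasDerivAt_id s) hs.ne').const_mul p).arctan
  have hBinc {a b : ℝ} (ha : 0 < a) (hb : 0 < b) :
      B b - B a ≤ l * (π / 2 - ∫ t in Ioi 0, w t) + π / 2 / (2 * l) := by
    have he := mul_le_mul_of_nonneg_left
      (sub_le_sub (h.deficit_le hw hwi hb) (h.deficit_nonneg hw ha)) hl.le
    have harc : (arctan (m b) - arctan (m a)) / (2 * l) ≤ π / 2 / (2 * l) := by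
      gcongr
      linarith [arctan_lt_pi_div_two (m b), arctan_pos.2 (h.pos a ha)]
    rw [sub_div] at harc
    simp only [hB]
    linarith
  have hGB {a b : ℝ} (ha : 0 < a) (hab : a ≤ b) (hsub : Icc a b ⊆ uIcc p p₀) :
      |G b - G a| ≤ B b - B a :=
    abs_sub_le_of_abs_deriv_le hab (fun s hs => hGd (ha.trans_le hs.1))
      (fun s hs => hBd (ha.trans_le hs.1)) fun s hs =>
        (h.abs_deriv_arctan_mul_ratio_le hp hp₀ hm (hsub hs)).trans
          (h.abs_deriv_sub_div_le hl (ha.trans_le hs.1))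
  have hGp : G p = arctan (m p) := by simp only [hG, mul_div_cancel₀ _ hp.ne']
  have hGp₀ : G p₀ = arctan (1 / p₀ * p) := by simp only [hG, hm, mul_comm]
  rw [← hGp, ← hGp₀]
  rcases le_total p p₀ with hpp | hpp
  · rw [abs_sub_comm]
    exact (hGB hp hpp Icc_subset_uIcc).trans (hBinc hp hp₀)
  · exact (hGB hp₀ hpp Icc_subset_uIcc').trans (hBinc hp₀ hp)

theorem exists_abs_integral_sub_arctan_le (h : IsMeanSlope w m m') (hw : Continuous w)
    (hwi : IntegrableOn w (Ioi 0)) {d : ℝ} (hd : 0 < d) (hdef : π / 2 - ∫ t in Ioi 0, w t ≤ d) :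
    ∃ ρ, 0 < ρ ∧ ∀ p, 0 ≤ p → |(∫ t in 0..p, w t) - arctan (ρ * p)| ≤ d + √(π * d) := by
  obtain ⟨p₀, hp₀, hm⟩ := h.exists_eq_one
  refine ⟨1 / p₀, one_div_pos.2 hp₀, fun p hp => ?_⟩
  rcases hp.eq_or_lt with rfl | hp
  · rw [intervalIntegral.integral_same, mul_zero, arctan_zero, sub_zero, abs_zero]
    positivity
  -- minimizes `l * d + π / 2 / (2 * l)`
  set l := √(π / (4 * d)) with hl
  have hl0 : 0 < l := Real.sqrt_pos.2 (by positivity)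
  have hl2 : l ^ 2 * (4 * d) = π := by rw [hl, Real.sq_sqrt (by positivity)]; field_simp
  have hmin : l * d + π / 2 / (2 * l) = √(π * d) := by
    symm
    rw [Real.sqrt_eq_iff_mul_self_eq (by positivity) (by positivity), ← hl2]
    field_simp
    ring
  have harc : |arctan (m p) - arctan (1 / p₀ * p)| ≤ √(π * d) := by
    rw [← hmin]
    refine (h.abs_arctan_sub_arctan_le hw hwi hl0 hp hp₀ hm).trans ?_
    gcongr
  have hlow := h.deficit_nonneg hw hp
  have hup := (h.deficit_le hw hwi hp).trans hdef
  rw [abs_le] at harc ⊢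
  constructor <;> linarith [harc.1, harc.2]

end IsMeanSlope

/-! ### From sector areas to gauges -/

/-- Up to `η`, twice the area of the sector of `{N ≤ 1}` with slopes in `[0, p]`, where `N` is a
gauge and `f t = N 1 t`, is what it would be for the ellipse `x ^ 2 / ρ + ρ * y ^ 2 ≤ 1`. -/
def SectorClose (f : ℝ → ℝ) (ρ η : ℝ) : Prop :=
  ∀ p, 0 ≤ p → |(∫ t in 0..p, (f t ^ 2)⁻¹) - arctan (ρ * p)| ≤ η

/-- If `f t = N 1 t`, the values on slopes of the gauge obtained from `N` by the diagonal map of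
determinant one that sends slopes `t` to `σ * t`. -/
def slopeScale (σ : ℝ) (f : ℝ → ℝ) (t : ℝ) : ℝ := √σ * f (t / σ)

theorem slopeScale_zero (σ : ℝ) (f : ℝ → ℝ) : slopeScale σ f 0 = √σ * f 0 := by
  rw [slopeScale, zero_div]

theorem slopeScale_comp_neg (σ : ℝ) (f : ℝ → ℝ) :
    slopeScale σ (fun t => f (-t)) = fun t => slopeScale σ f (-t) := by
  simp only [slopeScale, neg_div, funext_iff, implies_true]

theorem slopeScale_pos {σ : ℝ} (hσ : 0 < σ) {f : ℝ → ℝ} (hf : ∀ t, 0 < f t) (t : ℝ) :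
    0 < slopeScale σ f t :=
  mul_pos (Real.sqrt_pos.2 hσ) (hf _)

theorem convexOn_slopeScale (σ : ℝ) {f : ℝ → ℝ} (hf : ConvexOn ℝ univ f) :
    ConvexOn ℝ univ (slopeScale σ f) := by
  refine ((hf.comp_linearMap (LinearMap.mulRight ℝ σ⁻¹)).smul (Real.sqrt_nonneg σ)).congr
    fun t _ => ?_
  simp [slopeScale, div_eq_mul_inv]

theorem SectorClose.slopeScale {f : ℝ → ℝ} {ρ σ η : ℝ} (hσ : 0 < σ) (h : SectorClose f ρ η) :
    SectorClose (slopeScale σ f) (ρ / σ) η := by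
  intro p hp
  have hintegral : ∫ t in 0..p, (_root_.slopeScale σ f t ^ 2)⁻¹ = ∫ t in 0..p / σ, (f t ^ 2)⁻¹ := by
    have hsub := intervalIntegral.integral_comp_div (a := 0) (b := p) (fun t => (f t ^ 2)⁻¹) hσ.ne'
    rw [zero_div, smul_eq_mul, ← inv_mul_eq_iff_eq_mul₀ hσ.ne'] at hsub
    simp only [← hsub, ← intervalIntegral.integral_const_mul, _root_.slopeScale, mul_pow,
      Real.sq_sqrt hσ.le, mul_inv]
  rw [hintegral, div_mul_eq_mul_div, mul_div_assoc]
  exact h (p / σ) (div_nonneg hp hσ.le)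

theorem SectorClose.slopeScale_self {f : ℝ → ℝ} {ρ η : ℝ} (hρ : 0 < ρ) (h : SectorClose f ρ η) :
    SectorClose (_root_.slopeScale ρ f) 1 η :=
  div_self hρ.ne' ▸ h.slopeScale hρ

theorem continuous_of_convexOn_univ {f : ℝ → ℝ} (hf : ConvexOn ℝ univ f) : Continuous f :=
  continuousOn_univ.1 (hf.continuousOn isOpen_univ)

theorem continuous_inv_sq {f : ℝ → ℝ} (hf : Continuous f) (hf0 : ∀ t, 0 < f t) :
    Continuous fun t => (f t ^ 2)⁻¹ :=
  (hf.pow 2).inv₀ fun t => (pow_pos (hf0 t) 2).ne'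

theorem continuous_inv_one_add_sq : Continuous fun t : ℝ => (1 + t ^ 2)⁻¹ :=
  Continuous.inv₀ (by fun_prop) fun t => by positivity

theorem sub_div_le_arctan_sub {a b : ℝ} (ha : 0 ≤ a) (hab : a ≤ b) :
    (b - a) / (1 + b ^ 2) ≤ arctan b - arctan a := by
  rw [← integral_inv_one_add_sq, div_eq_mul_inv, ← smul_eq_mul, ← intervalIntegral.integral_const]
  refine intervalIntegral.integral_mono_on hab (by simp)
    (continuous_inv_one_add_sq.intervalIntegrable _ _) fun t ht => ?_
  have := ha.trans ht.1
  gcongr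
  exact ht.2

section IntegralInvSq

variable {f : ℝ → ℝ} {a b κ : ℝ}

theorem integral_inv_sq_le (hf : Continuous f) (hf0 : ∀ t, 0 < f t) (hab : a ≤ b) (hκ : 0 < κ)
    (h : ∀ s ∈ Icc a b, κ * √(1 + s ^ 2) ≤ f s) :
    ∫ t in a..b, (f t ^ 2)⁻¹ ≤ (κ ^ 2)⁻¹ * (arctan b - arctan a) := by
  rw [← integral_inv_one_add_sq, ← intervalIntegral.integral_const_mul]
  refine intervalIntegral.integral_mono_on hab ((continuous_inv_sq hf hf0).intervalIntegrable _ _)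
    ((continuous_const.mul continuous_inv_one_add_sq).intervalIntegrable _ _) fun s hs => ?_
  rw [← mul_inv]
  refine inv_anti₀ (by positivity) ?_
  simpa only [mul_pow, Real.sq_sqrt (by positivity : 0 ≤ 1 + s ^ 2)] using
    pow_le_pow_left₀ (by positivity) (h s hs) 2

theorem le_integral_inv_sq (hf : Continuous f) (hf0 : ∀ t, 0 < f t) (hab : a ≤ b)
    (h : ∀ s ∈ Icc a b, f s ≤ κ * √(1 + s ^ 2)) :
    (κ ^ 2)⁻¹ * (arctan b - arctan a) ≤ ∫ t in a..b, (f t ^ 2)⁻¹ := by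
  rw [← integral_inv_one_add_sq, ← intervalIntegral.integral_const_mul]
  refine intervalIntegral.integral_mono_on hab
    ((continuous_const.mul continuous_inv_one_add_sq).intervalIntegrable _ _)
    ((continuous_inv_sq hf hf0).intervalIntegrable _ _) fun s hs => ?_
  rw [← mul_inv]
  refine inv_anti₀ (pow_pos (hf0 s) 2) ?_
  simpa only [mul_pow, Real.sq_sqrt (by positivity : 0 ≤ 1 + s ^ 2)] using
    pow_le_pow_left₀ (hf0 s).le (h s hs) 2

end IntegralInvSq

theorem sqrt_one_add_sq_le {a b : ℝ} (hab : a ≤ b) :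
    √(1 + b ^ 2) ≤ (1 + (b - a)) * √(1 + a ^ 2) := by
  have hone : 1 ≤ √(1 + a ^ 2) := Real.one_le_sqrt.2 (by nlinarith)
  have hsq : √(1 + a ^ 2) ^ 2 = 1 + a ^ 2 := Real.sq_sqrt (by positivity)
  have hx : 0 ≤ b - a := sub_nonneg.2 hab
  rw [Real.sqrt_le_left (by nlinarith), mul_pow, hsq]
  nlinarith [mul_nonneg hx (sq_nonneg (a - 1)), mul_nonneg hx hx,
    mul_nonneg (mul_nonneg hx hx) (sq_nonneg a)]

theorem le_of_convexOn_of_mem_Icc {f : ℝ → ℝ} (hf : ConvexOn ℝ univ f) {a b r B : ℝ}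
    (hr : r ∈ Icc a b) (ha : f a ≤ B) (hb : f b ≤ B) : f r ≤ B :=
  (hf.le_max_of_mem_Icc (mem_univ a) (mem_univ b) hr).trans (max_le ha hb)

theorem convexOn_apply_zero_le {f : ℝ → ℝ} (hf : ConvexOn ℝ univ f) (hf0 : ∀ t, 0 < f t) {s w : ℝ}
    (hs : 0 ≤ s) (hw : 0 < w) : f 0 ≤ f s + s / w * f (-w) := by
  have hws : 0 < w + s := by linarith
  have hconv := hf.2 (mem_univ s) (mem_univ (-w)) (div_nonneg hw.le hws.le)
    (div_nonneg hs hws.le) (by field_simp)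
  simp only [smul_eq_mul] at hconv
  rw [show w / (w + s) * s + s / (w + s) * -w = 0 by ring] at hconv
  have := hf0 (-w)
  refine hconv.trans (add_le_add ?_ ?_)
  · exact mul_le_of_le_one_left (hf0 s).le ((div_le_one hws).2 (by linarith))
  · gcongr
    linarith

namespace SectorClose

variable {f : ℝ → ℝ} {η Δ : ℝ}

theorem abs_integral_sub_le (hf : Continuous f) (hf0 : ∀ t, 0 < f t) (h : SectorClose f 1 η)
    {a b : ℝ} (ha : 0 ≤ a) (hb : 0 ≤ b) :
    |(∫ t in a..b, (f t ^ 2)⁻¹) - (arctan b - arctan a)| ≤ 2 * η := by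
  have hc := continuous_inv_sq hf hf0
  have hpa := h a ha
  have hpb := h b hb
  rw [one_mul, abs_le] at hpa hpb
  rw [← intervalIntegral.integral_interval_sub_left (hc.intervalIntegrable 0 b)
    (hc.intervalIntegrable 0 a), abs_le]
  constructor <;> linarith [hpa.1, hpa.2, hpb.1, hpb.2]

/-- Otherwise the sector over `[t, t + Δ]` would be too small. -/
theorem exists_apply_le (hf : Continuous f) (hf0 : ∀ t, 0 < f t) (hΔ : 0 < Δ) (hΔ1 : Δ ≤ 1 / 100)
    (hη : η < Δ ^ 2 / 40) (h : SectorClose f 1 η) {t : ℝ} (ht : 0 ≤ t) (ht3 : t ≤ 3) :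
    ∃ s ∈ Icc t (t + Δ), f s ≤ (1 + Δ) * √(1 + s ^ 2) := by
  by_contra! hcon
  have hintegral := integral_inv_sq_le hf hf0 (by linarith) (by positivity)
    fun s hs => (hcon s hs).le
  have hinc := (abs_le.1 (h.abs_integral_sub_le hf hf0 ht (by linarith : 0 ≤ t + Δ))).1
  have harc : Δ / 17 ≤ arctan (t + Δ) - arctan t := by
    refine le_trans ?_ (sub_div_le_arctan_sub ht (by linarith))
    rw [add_sub_cancel_left]
    gcongr
    nlinarith
  have hinv : ((1 + Δ) ^ 2)⁻¹ ≤ 1 - Δ := by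
    rw [inv_le_iff_one_le_mul₀ (by positivity)]
    nlinarith [mul_pos hΔ hΔ, mul_pos (mul_pos hΔ hΔ) hΔ]
  nlinarith [mul_le_mul_of_nonneg_right hinv ((by positivity : 0 ≤ Δ / 17).trans harc)]

/-- Otherwise the sector over `[t, t + Δ / 2]` would be too large. -/
theorem exists_lt_apply (hf : Continuous f) (hf0 : ∀ t, 0 < f t) (hΔ : 0 < Δ) (hΔ1 : Δ ≤ 1 / 100)
    (hη : η < Δ ^ 2 / 40) (h : SectorClose f 1 η) {t : ℝ} (ht : 0 ≤ t) (ht3 : t ≤ 3) :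
    ∃ s ∈ Icc t (t + Δ / 2), (1 - 2 * Δ) * √(1 + s ^ 2) < f s := by
  by_contra! hcon
  have hintegral := le_integral_inv_sq hf hf0 (by linarith) hcon
  have hinc := (abs_le.1 (h.abs_integral_sub_le hf hf0 ht (by linarith : 0 ≤ t + Δ / 2))).2
  have harc : Δ / 2 / 17 ≤ arctan (t + Δ / 2) - arctan t := by
    refine le_trans ?_ (sub_div_le_arctan_sub ht (by linarith))
    rw [add_sub_cancel_left]
    gcongr
    nlinarith
  have hinv : 1 + 4 * Δ ≤ ((1 - 2 * Δ) ^ 2)⁻¹ := by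
    rw [le_inv_comm₀ (by positivity) (by nlinarith), inv_eq_one_div, le_div_iff₀ (by positivity)]
    nlinarith [mul_pos hΔ hΔ, mul_pos (mul_pos hΔ hΔ) hΔ]
  nlinarith [mul_le_mul_of_nonneg_right hinv ((by positivity : 0 ≤ Δ / 2 / 17).trans harc)]

/-- If `f` were much smaller than for the disc at `t`, convexity would keep it small on
`[t, t + Δ / 2]`. -/
theorem le_apply (hf : ConvexOn ℝ univ f) (hf0 : ∀ t, 0 < f t) (hΔ : 0 < Δ) (hΔ1 : Δ ≤ 1 / 100)
    (hη : η < Δ ^ 2 / 40) (h : SectorClose f 1 η) {t : ℝ} (ht : 0 ≤ t) (ht1 : t ≤ 1) :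
    (1 - 8 * Δ) * √(1 + t ^ 2) ≤ f t := by
  by_contra! hcon
  have hfc := continuous_of_convexOn_univ hf
  set ω := √(1 + t ^ 2)
  obtain ⟨s, hs, hfs⟩ := h.exists_apply_le hfc hf0 hΔ hΔ1 hη (by linarith : 0 ≤ t + Δ) (by linarith)
  have hsω : f s ≤ (1 + 4 * Δ) * ω := by
    calc f s ≤ (1 + Δ) * √(1 + s ^ 2) := hfs
      _ ≤ (1 + Δ) * ((1 + (s - t)) * ω) := by
        gcongr
        exact sqrt_one_add_sq_le (by linarith [hs.1])
      _ = ((1 + Δ) * (1 + (s - t))) * ω := by ring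
      _ ≤ _ := by
        gcongr
        nlinarith [hs.2]
  have hmid : f ((t + s) / 2) ≤ (1 - 2 * Δ) * ω := by
    have := hf.2 (mem_univ t) (mem_univ s) one_half_pos.le one_half_pos.le (add_halves 1)
    simp only [smul_eq_mul] at this
    rw [show (1 : ℝ) / 2 * t + 1 / 2 * s = (t + s) / 2 by ring] at this
    linarith
  obtain ⟨r, hr, hrω⟩ := h.exists_lt_apply hfc hf0 hΔ hΔ1 hη ht (by linarith)
  have hfr : f r ≤ (1 - 2 * Δ) * ω :=
    le_of_convexOn_of_mem_Icc hf ⟨hr.1, by linarith [hr.2, hs.1]⟩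
      (hcon.le.trans (by gcongr; linarith)) hmid
  refine absurd (hrω.trans_le hfr) (not_lt.2 ?_)
  exact mul_le_mul_of_nonneg_left (Real.sqrt_le_sqrt (by gcongr; exact hr.1)) (by linarith)

theorem apply_le_of_le (hf : ConvexOn ℝ univ f) (hf0 : ∀ t, 0 < f t) (hΔ : 0 < Δ)
    (hΔ1 : Δ ≤ 1 / 100) (hη : η < Δ ^ 2 / 40) (h : SectorClose f 1 η) {t : ℝ} (ht : Δ ≤ t)
    (ht1 : t ≤ 1) : f t ≤ (1 + 3 * Δ) * √(1 + t ^ 2) := by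
  have hfc := continuous_of_convexOn_univ hf
  obtain ⟨a, ha, hfa⟩ := h.exists_apply_le hfc hf0 hΔ hΔ1 hη (sub_nonneg.2 ht) (by linarith)
  obtain ⟨b, hb, hfb⟩ := h.exists_apply_le hfc hf0 hΔ hΔ1 hη (hΔ.le.trans ht) (by linarith)
  have hat : a ≤ t := by linarith [ha.2]
  refine le_of_convexOn_of_mem_Icc hf ⟨hat, hb.1⟩ ?_ ?_
  · calc f a ≤ (1 + Δ) * √(1 + t ^ 2) := hfa.trans (by
          gcongr
          exact (sub_nonneg.2 ht).trans ha.1)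
      _ ≤ _ := by
        gcongr
        linarith
  · calc f b ≤ (1 + Δ) * ((1 + (b - t)) * √(1 + t ^ 2)) := hfb.trans (by
          gcongr
          exact sqrt_one_add_sq_le hb.1)
      _ = ((1 + Δ) * (1 + (b - t))) * √(1 + t ^ 2) := by ring
      _ ≤ _ := by
        gcongr
        nlinarith [hb.2]

theorem apply_le (hf : ConvexOn ℝ univ f) (hf0 : ∀ t, 0 < f t) (hΔ : 0 < Δ) (hΔ1 : Δ ≤ 1 / 100)
    (hη : η < Δ ^ 2 / 40) (h : SectorClose f 1 η) (hzero : f 0 ≤ 1 + 6 * Δ) {t : ℝ} (ht : 0 ≤ t)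
    (ht1 : t ≤ 1) : f t ≤ (1 + 6 * Δ) * √(1 + t ^ 2) := by
  rcases le_total Δ t with hΔt | hΔt
  · refine (h.apply_le_of_le hf hf0 hΔ hΔ1 hη hΔt ht1).trans ?_
    gcongr
    norm_num
  · have hfΔ := h.apply_le_of_le hf hf0 hΔ hΔ1 hη le_rfl (by linarith)
    have hωΔ : √(1 + Δ ^ 2) ≤ 1 + Δ := by simpa using sqrt_one_add_sq_le hΔ.le
    have hft : f t ≤ 1 + 6 * Δ := le_of_convexOn_of_mem_Icc hf ⟨ht, hΔt⟩ hzero (by nlinarith)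
    exact hft.trans (le_mul_of_one_le_right (by positivity) (Real.one_le_sqrt.2 (by nlinarith)))

/-- Interpolates between a slope `s ≤ Δ` in one quadrant and a slope `-t / ρ` with `1 ≤ t` in the
adjacent one. -/
theorem apply_zero_le (hf : ConvexOn ℝ univ f) (hf0 : ∀ t, 0 < f t) (hΔ : 0 < Δ)
    (hΔ1 : Δ ≤ 1 / 100) (hη : η < Δ ^ 2 / 40) (h : SectorClose f 1 η) {ρ : ℝ} (hρ : 0 < ρ)
    (hρ1 : ρ ≤ 1) (h' : SectorClose (fun t => f (-t)) ρ η) : f 0 ≤ 1 + 6 * Δ := by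
  have hfc := continuous_of_convexOn_univ hf
  have hρs : ρ ≤ √ρ := Real.le_sqrt_of_sq_le (by nlinarith)
  obtain ⟨s, hs, hfs⟩ := h.exists_apply_le hfc hf0 hΔ hΔ1 hη le_rfl (by norm_num)
  obtain ⟨t, ht, hft⟩ := (h'.slopeScale_self hρ).exists_apply_le
    (by unfold _root_.slopeScale; fun_prop) (slopeScale_pos hρ fun t => hf0 (-t)) hΔ hΔ1 hη
    zero_le_one (by norm_num)
  rw [zero_add] at hs
  have hs1 : f s ≤ 1 + 3 * Δ := by
    have : √(1 + s ^ 2) ≤ 1 + s := by simpa using sqrt_one_add_sq_le hs.1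
    nlinarith [hs.2]
  have ht3 : √ρ * f (-(t / ρ)) ≤ 3 := by
    have : √(1 + t ^ 2) ≤ 2 := by
      rw [Real.sqrt_le_left zero_le_two]
      nlinarith [ht.1, ht.2]
    rw [_root_.slopeScale] at hft
    nlinarith
  have ht0 : 0 < t := by linarith [ht.1]
  have hsw : s / (t / ρ) * f (-(t / ρ)) ≤ 3 * Δ := by
    calc s / (t / ρ) * f (-(t / ρ)) = s / t * (ρ * f (-(t / ρ))) := by field_simp
      _ ≤ Δ * (√ρ * f (-(t / ρ))) := by
        have := hf0 (-(t / ρ))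
        gcongr
        exact (div_le_self hs.1 ht.1).trans hs.2
      _ ≤ 3 * Δ := by nlinarith
  linarith [convexOn_apply_zero_le hf hf0 hs.1 (div_pos ht0 hρ)]

theorem axis_bounds (hf : ConvexOn ℝ univ f) (hf0 : ∀ t, 0 < f t) (hΔ : 0 < Δ)
    (hΔ1 : Δ ≤ 1 / 100) (hη : η < Δ ^ 2 / 40) (h : SectorClose f 1 η) {ρ : ℝ} (hρ : 0 < ρ)
    (h' : SectorClose (fun t => f (-t)) ρ η) :
    f 0 ≤ 1 + 6 * Δ ∧ 1 - 14 * Δ ≤ √ρ ∧ √ρ * (1 - 14 * Δ) ≤ 1 := by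
  have hf' : ConvexOn ℝ univ fun t => f (-t) := hf.comp_linearMap (-LinearMap.id)
  have hg := h'.slopeScale_self hρ
  have hgc := convexOn_slopeScale ρ hf'
  have hg0 := slopeScale_pos hρ fun t => hf0 (-t)
  have hlow : 1 - 8 * Δ ≤ f 0 := by
    simpa using h.le_apply hf hf0 hΔ hΔ1 hη le_rfl zero_le_one
  have hlow' : 1 - 8 * Δ ≤ √ρ * f 0 := by
    simpa [slopeScale_zero] using hg.le_apply hgc hg0 hΔ hΔ1 hη le_rfl zero_le_one
  rcases le_total ρ 1 with hρ1 | hρ1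
  · have hup := h.apply_zero_le hf hf0 hΔ hΔ1 hη hρ hρ1 h'
    have hsρ1 : √ρ ≤ 1 := Real.sqrt_le_one.2 hρ1
    have hsρ : 0 < √ρ := Real.sqrt_pos.2 hρ
    exact ⟨hup, by nlinarith, by nlinarith⟩
  · have hsρ1 : 1 ≤ √ρ := Real.one_le_sqrt.2 hρ1
    have hup : √ρ * f 0 ≤ 1 + 6 * Δ := by
      have := hg.apply_zero_le hgc hg0 hΔ hΔ1 hη (one_div_pos.2 hρ) ((div_le_one hρ).2 hρ1)
        (by simpa only [slopeScale_comp_neg, neg_neg] using h.slopeScale hρ)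
      rwa [slopeScale_zero, neg_zero] at this
    exact ⟨by nlinarith [hf0 0], by linarith, by nlinarith⟩

/-- Slopes above `1 / ρ` are not covered: they are reached by exchanging the coordinates. -/
theorem half_plane_bounds (hf : ConvexOn ℝ univ f) (hf0 : ∀ t, 0 < f t) (hΔ : 0 < Δ)
    (hΔ1 : Δ ≤ 1 / 100) (hη : η < Δ ^ 2 / 40) {ρ σ : ℝ} (hρ : 0 < ρ) (hσ : 0 < σ)
    (h : SectorClose f ρ η) (h' : SectorClose (fun t => f (-t)) σ η) :
    √ρ * (1 - 14 * Δ) ≤ √σ ∧ √σ * (1 - 14 * Δ) ≤ √ρ ∧ ∀ t, 0 ≤ t → t * ρ ≤ 1 →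
      (1 - 8 * Δ) * √(1 / ρ + ρ * t ^ 2) ≤ f t ∧ f t ≤ (1 + 6 * Δ) * √(1 / ρ + ρ * t ^ 2) := by
  have hsρ : 0 < √ρ := Real.sqrt_pos.2 hρ
  have hg := h.slopeScale_self hρ
  have hgc := convexOn_slopeScale ρ hf
  have hg0 := slopeScale_pos hρ hf0
  obtain ⟨hzero, hσρ, hρσ⟩ := hg.axis_bounds hgc hg0 hΔ hΔ1 hη (div_pos hσ hρ)
    (slopeScale_comp_neg ρ f ▸ h'.slopeScale hρ)
  rw [Real.sqrt_div hσ.le] at hσρ hρσ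
  rw [le_div_iff₀ hsρ] at hσρ
  rw [div_mul_eq_mul_div, div_le_one hsρ] at hρσ
  refine ⟨by linarith, hρσ, fun t ht ht1 => ?_⟩
  have hlow := hg.le_apply hgc hg0 hΔ hΔ1 hη (mul_nonneg ht hρ.le) ht1
  have hup := hg.apply_le hgc hg0 hΔ hΔ1 hη hzero (mul_nonneg ht hρ.le) ht1
  have hell : √(1 + (t * ρ) ^ 2) = √ρ * √(1 / ρ + ρ * t ^ 2) := by
    rw [← Real.sqrt_mul hρ.le]
    congr 1
    field_simp
  rw [_root_.slopeScale, mul_div_cancel_right₀ _ hρ.ne', hell] at hlow hup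
  rw [mul_left_comm] at hlow hup
  exact ⟨le_of_mul_le_mul_left hlow hsρ, le_of_mul_le_mul_left hup hsρ⟩

end SectorClose

/-! ### Area of a quadrant of a gauge body -/

/-- The gauge function of a planar convex body containing the origin in its interior, as a function
of the two coordinates. -/
structure IsPlaneGauge (N : ℝ → ℝ → ℝ) : Prop where
  cont : Continuous fun p : ℝ × ℝ => N p.1 p.2
  pos : ∀ x y, (x ≠ 0 ∨ y ≠ 0) → 0 < N x y
  homog : ∀ r x y, 0 ≤ r → N (r * x) (r * y) = r * N x y
  add_le : ∀ x y u w, N (x + u) (y + w) ≤ N x y + N u w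

/-- The part of the unit body of `N` in the open first quadrant. -/
def quadrantPart (N : ℝ → ℝ → ℝ) : Set (ℝ × ℝ) := {p | 0 < p.1 ∧ 0 < p.2 ∧ N p.1 p.2 ≤ 1}

/-- `quadrantPart N` in the coordinates `(x, t)` with `y = t * x`: the ray of slope `t` stays in the
body for `x ≤ 1 / N 1 t`. -/
def slopeRegion (N : ℝ → ℝ → ℝ) : Set (ℝ × ℝ) := {q | 0 < q.1 ∧ 0 < q.2 ∧ q.1 * N 1 q.2 ≤ 1}

theorem lintegral_ofReal_Ioc {b : ℝ} (hb : 0 ≤ b) :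
    ∫⁻ x in Ioc 0 b, ENNReal.ofReal x = ENNReal.ofReal (b ^ 2 / 2) := by
  rw [← ofReal_integral_eq_lintegral_ofReal (f := fun x => x)
    (continuous_id.integrableOn_Icc.mono_set Ioc_subset_Icc_self),
    ← intervalIntegral.integral_of_le hb, integral_id, zero_pow two_ne_zero, sub_zero]
  filter_upwards [ae_restrict_mem measurableSet_Ioc] with x hx using hx.1.le

namespace IsPlaneGauge

variable {N : ℝ → ℝ → ℝ}

theorem swap (hN : IsPlaneGauge N) : IsPlaneGauge fun x y => N y x where
  cont := hN.cont.comp continuous_swap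
  pos x y h := hN.pos y x h.symm
  homog r x y hr := hN.homog r y x hr
  add_le x y x' y' := hN.add_le y x y' x'

theorem reflect (hN : IsPlaneGauge N) {σ τ : ℝ} (hσ : σ ≠ 0) (hτ : τ ≠ 0) :
    IsPlaneGauge fun x y => N (σ * x) (τ * y) where
  cont := hN.cont.comp (by fun_prop : Continuous fun p : ℝ × ℝ => (σ * p.1, τ * p.2))
  pos x y h := hN.pos _ _ (by simpa [hσ, hτ] using h)
  homog r x y hr := by
    rw [mul_left_comm σ, mul_left_comm τ, hN.homog _ _ _ hr]
  add_le x y x' y' := by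
    simpa only [mul_add] using hN.add_le (σ * x) (τ * y) (σ * x') (τ * y')

theorem slope_pos (hN : IsPlaneGauge N) (t : ℝ) : 0 < N 1 t := hN.pos 1 t (.inl one_ne_zero)

theorem continuous_slope (hN : IsPlaneGauge N) (σ : ℝ) : Continuous (N σ) :=
  hN.cont.comp (Continuous.prodMk_right σ)

theorem convexOn_slope (hN : IsPlaneGauge N) (σ : ℝ) : ConvexOn ℝ univ (N σ) := by
  refine ⟨convex_univ, fun x _ y _ a b ha hb hab => ?_⟩
  have := hN.add_le (a * σ) (a * x) (b * σ) (b * y)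
  rw [hN.homog _ _ _ ha, hN.homog _ _ _ hb, ← add_mul, hab, one_mul] at this
  simpa using this

theorem continuous_inv_sq_slope (hN : IsPlaneGauge N) : Continuous fun t => (N 1 t ^ 2)⁻¹ :=
  continuous_inv_sq (hN.continuous_slope 1) hN.slope_pos

theorem measurableSet_quadrantPart (hN : IsPlaneGauge N) : MeasurableSet (quadrantPart N) :=
  (measurableSet_lt measurable_const measurable_fst).inter
    ((measurableSet_lt measurable_const measurable_snd).inter
      (measurableSet_le hN.cont.measurable measurable_const))

theorem measurableSet_slopeRegion (hN : IsPlaneGauge N) : MeasurableSet (slopeRegion N) :=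
  (measurableSet_lt measurable_const measurable_fst).inter
    ((measurableSet_lt measurable_const measurable_snd).inter (measurableSet_le
      (measurable_fst.mul ((hN.continuous_slope 1).measurable.comp measurable_snd))
      measurable_const))

theorem preimage_mk_quadrantPart (hN : IsPlaneGauge N) {x : ℝ} (hx : 0 < x) :
    Prod.mk x ⁻¹' quadrantPart N = x • (Prod.mk x ⁻¹' slopeRegion N) := by
  ext y
  have hy : 0 < x⁻¹ * y ↔ 0 < y := mul_pos_iff_of_pos_left (inv_pos.2 hx)
  have hNy : x * N 1 (x⁻¹ * y) = N x y := by
    rw [← hN.homog _ _ _ hx.le, mul_one, mul_inv_cancel_left₀ hx.ne']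
  simp only [mem_smul_set_iff_inv_smul_mem₀ hx.ne', quadrantPart, slopeRegion, mem_preimage,
    mem_ofPred_eq, smul_eq_mul, hy, hNy]

theorem volume_preimage_mk_quadrantPart (hN : IsPlaneGauge N) (x : ℝ) :
    volume (Prod.mk x ⁻¹' quadrantPart N) =
      ∫⁻ t, (slopeRegion N).indicator (fun q => ENNReal.ofReal q.1) (x, t) := by
  by_cases hx : 0 < x
  · rw [hN.preimage_mk_quadrantPart hx, Measure.addHaar_smul, ← setLIntegral_one,
      ← lintegral_const_mul' _ _ ENNReal.ofReal_ne_top,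
      ← lintegral_indicator (measurable_prodMk_left hN.measurableSet_slopeRegion)]
    refine lintegral_congr fun t => ?_
    rw [Module.finrank_self, pow_one, abs_of_pos hx]
    simp only [indicator, mul_one]
    rfl
  · have hempty : Prod.mk x ⁻¹' quadrantPart N = ∅ :=
      eq_empty_of_forall_notMem fun y hy => hx hy.1
    have hzero (t : ℝ) : (slopeRegion N).indicator (fun q => ENNReal.ofReal q.1) (x, t) = 0 :=
      indicator_of_notMem (fun h => hx h.1) _
    simp only [hempty, measure_empty, hzero, lintegral_zero]

theorem lintegral_indicator_slopeRegion (hN : IsPlaneGauge N) (t : ℝ) :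
    ∫⁻ x, (slopeRegion N).indicator (fun q => ENNReal.ofReal q.1) (x, t) =
      (Ioi 0).indicator (fun t => ENNReal.ofReal ((N 1 t ^ 2)⁻¹ / 2)) t := by
  by_cases ht : 0 < t
  · have hslice (x : ℝ) : (slopeRegion N).indicator (fun q => ENNReal.ofReal q.1) (x, t) =
        (Ioc 0 (N 1 t)⁻¹).indicator ENNReal.ofReal x := by
      simp only [indicator, slopeRegion, mem_ofPred_eq, ht, true_and, mem_Ioc, ← one_div,
        le_div_iff₀ (hN.slope_pos t)]
    rw [lintegral_congr hslice, lintegral_indicator measurableSet_Ioc,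
      lintegral_ofReal_Ioc (inv_pos.2 (hN.slope_pos t)).le, indicator_of_mem (mem_Ioi.2 ht),
      inv_pow]
  · have hzero (x : ℝ) : (slopeRegion N).indicator (fun q => ENNReal.ofReal q.1) (x, t) = 0 :=
      indicator_of_notMem (fun h => ht h.2.1) _
    rw [lintegral_congr hzero, lintegral_zero, indicator_of_notMem (mt mem_Ioi.1 ht)]

theorem volume_quadrantPart (hN : IsPlaneGauge N) :
    volume (quadrantPart N) = ∫⁻ t in Ioi 0, ENNReal.ofReal ((N 1 t ^ 2)⁻¹ / 2) := by
  rw [Measure.volume_eq_prod, Measure.prod_apply hN.measurableSet_quadrantPart,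
    ← lintegral_indicator measurableSet_Ioi]
  simp only [hN.volume_preimage_mk_quadrantPart, ← hN.lintegral_indicator_slopeRegion]
  exact lintegral_lintegral_swap ((ENNReal.measurable_ofReal.comp measurable_fst).indicator
    hN.measurableSet_slopeRegion).aemeasurable

theorem integrableOn_inv_sq (hN : IsPlaneGauge N) (h : volume (quadrantPart N) ≠ ⊤) :
    IntegrableOn (fun t => (N 1 t ^ 2)⁻¹) (Ioi 0) := by
  have hi : IntegrableOn (fun t => (N 1 t ^ 2)⁻¹ / 2) (Ioi 0) := by
    refine ⟨(hN.continuous_inv_sq_slope.div_const 2).aestronglyMeasurable, ?_⟩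
    rw [hasFiniteIntegral_iff_ofReal (Eventually.of_forall fun t => by positivity),
      ← hN.volume_quadrantPart]
    exact h.lt_top
  exact (hi.mul_const 2).congr (.of_forall fun t => div_mul_cancel₀ _ two_ne_zero)

theorem integral_inv_sq (hN : IsPlaneGauge N) :
    ∫ t in Ioi 0, (N 1 t ^ 2)⁻¹ = 2 * (volume (quadrantPart N)).toReal := by
  rw [hN.volume_quadrantPart, ← integral_eq_lintegral_of_nonneg_ae
    (Eventually.of_forall fun t => by positivity)
    (hN.continuous_inv_sq_slope.div_const 2).aestronglyMeasurable, integral_div,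
    mul_div_cancel₀ _ two_ne_zero]

/-! ### Stability in one quadrant -/

theorem hasDerivAt_integral_add_integral_inv (hN : IsPlaneGauge N) {p : ℝ} (hp : 0 < p) :
    HasDerivAt (fun p => (∫ t in 0..p, (N t 1 ^ 2)⁻¹) + ∫ t in 0..p⁻¹, (N 1 t ^ 2)⁻¹) 0 p := by
  refine ((hN.swap.continuous_inv_sq_slope.integral_hasStrictDerivAt 0 p).hasDerivAt.add
    ((hN.continuous_inv_sq_slope.integral_hasStrictDerivAt 0 p⁻¹).hasDerivAt.comp p
      (hasDerivAt_inv hp.ne'))).congr_deriv ?_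
  have hslope : N p 1 = p * N 1 p⁻¹ := by
    rw [← hN.homog _ _ _ hp.le, mul_one, mul_inv_cancel₀ hp.ne']
  have := hN.slope_pos p⁻¹
  rw [hslope]
  field_simp
  ring

theorem integral_swap (hN : IsPlaneGauge N) (hi : IntegrableOn (fun t => (N 1 t ^ 2)⁻¹) (Ioi 0))
    {p : ℝ} (hp : 0 < p) : ∫ t in 0..p, (N t 1 ^ 2)⁻¹ =
      (∫ t in Ioi 0, (N 1 t ^ 2)⁻¹) - ∫ t in 0..p⁻¹, (N 1 t ^ 2)⁻¹ := by
  set S : ℝ → ℝ := fun p => (∫ t in 0..p, (N t 1 ^ 2)⁻¹) + ∫ t in 0..p⁻¹, (N 1 t ^ 2)⁻¹ with hS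
  have hconst {q : ℝ} (hq : 0 < q) : S q = S p :=
    isOpen_Ioi.is_const_of_deriv_eq_zero (convex_Ioi 0).isPreconnected
      (fun x hx =>
        (hN.hasDerivAt_integral_add_integral_inv hx).differentiableAt.differentiableWithinAt)
      (fun x hx => (hN.hasDerivAt_integral_add_integral_inv hx).deriv) hq hp
  have hlim : Tendsto S (𝓝[>] 0) (𝓝 (0 + ∫ t in Ioi 0, (N 1 t ^ 2)⁻¹)) := by
    refine Tendsto.add ?_ (intervalIntegral_tendsto_integral_Ioi 0 hi tendsto_inv_nhdsGT_zero)
    simpa using ((hN.swap.continuous_inv_sq_slope.integral_hasStrictDerivAt 0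
      0).hasDerivAt.continuousAt.tendsto).mono_left nhdsWithin_le_nhds
  have hlim' : Tendsto S (𝓝[>] 0) (𝓝 (S p)) :=
    tendsto_const_nhds.congr' (eventually_mem_nhdsWithin.mono fun q hq => (hconst hq).symm)
  have := tendsto_nhds_unique hlim hlim'
  simp only [hS] at this
  linarith

theorem sectorClose_swap (hN : IsPlaneGauge N)
    (hA : volume (quadrantPart N) = ENNReal.ofReal (π / 4)) {ρ η : ℝ} (hρ : 0 < ρ)
    (h : SectorClose (N 1) ρ η) : SectorClose (fun t => N t 1) (1 / ρ) η := by
  intro p hp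
  rcases hp.eq_or_lt with rfl | hp
  · simpa using h 0 le_rfl
  have hpi : ∫ t in Ioi 0, (N 1 t ^ 2)⁻¹ = π / 2 := by
    rw [hN.integral_inv_sq, hA, ENNReal.toReal_ofReal (by positivity)]
    ring
  have harc : arctan (1 / ρ * p) = π / 2 - arctan (ρ * p⁻¹) := by
    rw [← arctan_inv_of_pos (by positivity), mul_inv, inv_inv, one_div]
  rw [hN.integral_swap (hN.integrableOn_inv_sq (hA ▸ ENNReal.ofReal_ne_top)) hp, hpi, harc,
    sub_sub_sub_cancel_left, abs_sub_comm]
  exact h p⁻¹ (inv_nonneg.2 hp.le)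

end IsPlaneGauge

section Quadrant

variable {N M : ℝ → ℝ → ℝ}

theorem exists_isMeanSlope_of_polar (hN : IsPlaneGauge N) (hM : IsPlaneGauge M)
    (hNM : ∀ x y u w, x * u + y * w ≤ N x y * M u w) (hNfin : volume (quadrantPart N) ≠ ⊤)
    (hMfin : volume (quadrantPart M) ≠ ⊤) :
    ∃ m m', IsMeanSlope (fun p => √((volume (quadrantPart M)).toReal /
      (volume (quadrantPart N)).toReal) * (N 1 p ^ 2)⁻¹) m m' := by
  obtain ⟨m, m', h⟩ := exists_isMeanSlope (hN.continuous_slope 1) (hM.continuous_slope 1)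
    hN.slope_pos hM.slope_pos (fun p s _ _ => by simpa using hNM 1 p 1 s)
    (hN.integrableOn_inv_sq hNfin) (hM.integrableOn_inv_sq hMfin)
  rw [hN.integral_inv_sq, hM.integral_inv_sq, mul_div_mul_left _ _ two_ne_zero] at h
  exact ⟨m, m', h⟩

theorem integral_const_mul_inv_sq (hN : IsPlaneGauge N)
    (hA : volume (quadrantPart N) = ENNReal.ofReal (π / 4)) (κ : ℝ) :
    ∫ t in Ioi 0, κ * (N 1 t ^ 2)⁻¹ = κ * (π / 2) := by
  rw [integral_const_mul, hN.integral_inv_sq, hA, ENNReal.toReal_ofReal (by positivity)]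
  ring

theorem volume_quadrantPart_le (hN : IsPlaneGauge N) (hM : IsPlaneGauge M)
    (hNM : ∀ x y u w, x * u + y * w ≤ N x y * M u w)
    (hA : volume (quadrantPart N) = ENNReal.ofReal (π / 4))
    (hMfin : volume (quadrantPart M) ≠ ⊤) : (volume (quadrantPart M)).toReal ≤ π / 4 := by
  have hNfin : volume (quadrantPart N) ≠ ⊤ := hA ▸ ENNReal.ofReal_ne_top
  obtain ⟨m, m', h⟩ := exists_isMeanSlope_of_polar hN hM hNM hNfin hMfin
  have hκ := h.integral_weight_le (continuous_const.mul hN.continuous_inv_sq_slope)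
    ((hN.integrableOn_inv_sq hNfin).const_mul _)
  rw [integral_const_mul_inv_sq hN hA, mul_le_iff_le_one_left (by positivity),
    Real.sqrt_le_left zero_le_one, one_pow, hA, ENNReal.toReal_ofReal (by positivity)] at hκ
  exact (div_le_one (by positivity)).1 hκ

theorem two_mul_add_sqrt_le {δ : ℝ} (hδ : 0 ≤ δ) (hδ1 : δ ≤ 1) :
    2 * (2 * π * δ) + √(π * (2 * π * δ)) ≤ 18 * √δ := by
  have hs : δ ≤ √δ := Real.le_sqrt_of_sq_le (by nlinarith)
  have hpi : √(π * (2 * π * δ)) ≤ 5 * √δ := by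
    rw [show π * (2 * π * δ) = (2 * π ^ 2) * δ by ring, Real.sqrt_mul (by positivity)]
    gcongr
    rw [Real.sqrt_le_left (by norm_num)]
    nlinarith [Real.pi_lt_d2, Real.pi_pos]
  nlinarith [Real.pi_lt_d2, Real.pi_pos]

theorem integral_inv_sq_mem_Icc (hN : IsPlaneGauge N)
    (hA : volume (quadrantPart N) = ENNReal.ofReal (π / 4)) {p : ℝ} (hp : 0 ≤ p) :
    ∫ t in 0..p, (N 1 t ^ 2)⁻¹ ∈ Icc 0 (π / 2) := by
  have h0 (t : ℝ) : 0 ≤ (N 1 t ^ 2)⁻¹ := by positivity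
  refine ⟨intervalIntegral.integral_nonneg hp fun t _ => h0 t, ?_⟩
  rw [intervalIntegral.integral_of_le hp]
  refine (setIntegral_mono_set (hN.integrableOn_inv_sq (hA ▸ ENNReal.ofReal_ne_top))
    (.of_forall h0) (.of_forall Ioc_subset_Ioi_self)).trans_eq ?_
  simpa only [one_mul] using integral_const_mul_inv_sq hN hA 1

theorem exists_sectorClose (hN : IsPlaneGauge N) (hM : IsPlaneGauge M)
    (hNM : ∀ x y u w, x * u + y * w ≤ N x y * M u w)
    (hA : volume (quadrantPart N) = ENNReal.ofReal (π / 4))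
    (hMfin : volume (quadrantPart M) ≠ ⊤) {δ : ℝ} (hδ : 0 < δ) (hδ1 : δ ≤ 1)
    (hle : π / 4 * (1 - 4 * δ) ≤ (volume (quadrantPart M)).toReal) :
    ∃ ρ, 0 < ρ ∧ SectorClose (N 1) ρ (18 * √δ) := by
  have hNfin : volume (quadrantPart N) ≠ ⊤ := hA ▸ ENNReal.ofReal_ne_top
  have hMle := volume_quadrantPart_le hN hM hNM hA hMfin
  obtain ⟨m, m', h⟩ := exists_isMeanSlope_of_polar hN hM hNM hNfin hMfin
  rw [hA, ENNReal.toReal_ofReal (by positivity)] at h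
  set r := (volume (quadrantPart M)).toReal / (π / 4)
  have hr : 1 - 4 * δ ≤ r := (le_div_iff₀' (by positivity)).2 hle
  have hr0 : 0 ≤ r := by positivity
  have hr1 : r ≤ 1 := (div_le_one (by positivity)).2 hMle
  have hκ1 : √r ≤ 1 := Real.sqrt_le_one.2 hr1
  have hκ : 1 - 4 * δ ≤ √r := hr.trans (Real.le_sqrt_of_sq_le (by nlinarith))
  obtain ⟨ρ, hρ, hclose⟩ := h.exists_abs_integral_sub_arctan_le
    (continuous_const.mul hN.continuous_inv_sq_slope)
    ((hN.integrableOn_inv_sq hNfin).const_mul _) (d := 2 * π * δ) (by positivity) (by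
      rw [integral_const_mul_inv_sq hN hA]
      nlinarith [Real.pi_pos])
  refine ⟨ρ, hρ, fun p hp => le_trans ?_ (two_mul_add_sqrt_le hδ.le hδ1)⟩
  obtain ⟨hF0, hF1⟩ := integral_inv_sq_mem_Icc hN hA hp
  have hp' := hclose p hp
  rw [intervalIntegral.integral_const_mul] at hp'
  rw [abs_le] at hp' ⊢
  constructor <;> nlinarith

end Quadrant

/-! ### The four quadrants -/

/-- The two signs, by which the reflections in the coordinate axes multiply the coordinates. -/
def IsSign (σ : ℝ) : Prop := σ = 1 ∨ σ = -1

namespace IsSign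

theorem one : IsSign 1 := .inl rfl

theorem neg_one : IsSign (-1) := .inr rfl

variable {σ : ℝ}

theorem neg (hσ : IsSign σ) : IsSign (-σ) := by
  rcases hσ with rfl | rfl
  · exact neg_one
  · simpa only [neg_neg] using one

theorem mul_self (hσ : IsSign σ) : σ * σ = 1 := mul_self_eq_one_iff.2 hσ

theorem mul_self_mul (hσ : IsSign σ) (x : ℝ) : σ * (σ * x) = x := by
  rw [← mul_assoc, hσ.mul_self, one_mul]

theorem ne_zero (hσ : IsSign σ) : σ ≠ 0 := fun h => by simpa [h] using hσ.mul_self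

end IsSign

theorem exists_isSign_mul_nonneg (x : ℝ) : ∃ σ, IsSign σ ∧ 0 ≤ σ * x := by
  rcases le_total 0 x with h | h
  · exact ⟨1, .one, by rwa [one_mul]⟩
  · exact ⟨-1, .neg_one, by rwa [neg_one_mul, neg_nonneg]⟩

theorem measurePreserving_reflect {σ τ : ℝ} (hσ : IsSign σ) (hτ : IsSign τ) :
    MeasurePreserving (fun p : ℝ × ℝ => (σ * p.1, τ * p.2)) volume volume := by
  have hmul {σ : ℝ} (hσ : IsSign σ) :
      MeasurePreserving (fun x : ℝ => σ * x) volume volume := by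
    rcases hσ with rfl | rfl
    · simp only [one_mul]
      exact MeasurePreserving.id volume
    · simpa only [neg_one_mul] using Measure.measurePreserving_neg (volume : Measure ℝ)
  exact (hmul hσ).prod (hmul hτ)

theorem volume_axes : volume {p : ℝ × ℝ | p.1 = 0 ∨ p.2 = 0} = 0 := by
  have haxes : {p : ℝ × ℝ | p.1 = 0 ∨ p.2 = 0} = {0} ×ˢ univ ∪ univ ×ˢ {0} := by ext; simp
  rw [haxes, Measure.volume_eq_prod, measure_union_null_iff]
  simp

/-- The open quadrant of the points whose coordinates have the signs of `σ` and `τ`. -/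
def signedQuadrant (σ τ : ℝ) : Set (ℝ × ℝ) := {p | 0 < σ * p.1 ∧ 0 < τ * p.2}

theorem measurableSet_signedQuadrant (σ τ : ℝ) : MeasurableSet (signedQuadrant σ τ) :=
  (measurableSet_lt measurable_const (measurable_fst.const_mul σ)).inter
    (measurableSet_lt measurable_const (measurable_snd.const_mul τ))

theorem IsPlaneGauge.volume_inter_signedQuadrant {N : ℝ → ℝ → ℝ} (hN : IsPlaneGauge N) {σ τ : ℝ}
    (hσ : IsSign σ) (hτ : IsSign τ) :
    volume ({p : ℝ × ℝ | N p.1 p.2 ≤ 1} ∩ signedQuadrant σ τ) =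
      volume (quadrantPart fun x y => N (σ * x) (τ * y)) := by
  have hm : MeasurableSet ({p : ℝ × ℝ | N p.1 p.2 ≤ 1} ∩ signedQuadrant σ τ) :=
    (measurableSet_le hN.cont.measurable measurable_const).inter
      (measurableSet_signedQuadrant σ τ)
  rw [← (measurePreserving_reflect hσ hτ).measure_preimage hm.nullMeasurableSet]
  congr 1
  ext p
  simp only [quadrantPart, signedQuadrant, mem_ofPred_eq, mem_preimage, mem_inter_iff,
    hσ.mul_self_mul, hτ.mul_self_mul]
  tauto

theorem volume_le_sum_signedQuadrant (D : Set (ℝ × ℝ)) :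
    volume D ≤ volume (D ∩ signedQuadrant 1 1) + volume (D ∩ signedQuadrant 1 (-1)) +
      volume (D ∩ signedQuadrant (-1) 1) + volume (D ∩ signedQuadrant (-1) (-1)) := by
  have hsub : D ⊆ {p : ℝ × ℝ | p.1 = 0 ∨ p.2 = 0} ∪ ((D ∩ signedQuadrant 1 1) ∪
      (D ∩ signedQuadrant 1 (-1)) ∪ (D ∩ signedQuadrant (-1) 1) ∪
      (D ∩ signedQuadrant (-1) (-1))) := by
    rintro ⟨x, y⟩ h
    simp only [signedQuadrant, mem_union, mem_inter_iff, mem_ofPred_eq, h, true_and]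
    rcases lt_trichotomy x 0 with hx | hx | hx <;> rcases lt_trichotomy y 0 with hy | hy | hy <;>
      simp [hx, hy]
  refine (measure_mono hsub).trans ((measure_union_le _ _).trans ?_)
  rw [volume_axes, zero_add]
  refine (measure_union_le _ _).trans (add_le_add_left ?_ _)
  exact (measure_union_le _ _).trans (add_le_add_left (measure_union_le _ _) _)

theorem toReal_volume_le_sum_signedQuadrant {D : Set (ℝ × ℝ)} (hD : volume D ≠ ⊤) :
    (volume D).toReal ≤ (volume (D ∩ signedQuadrant 1 1)).toReal +
      (volume (D ∩ signedQuadrant 1 (-1))).toReal + (volume (D ∩ signedQuadrant (-1) 1)).toReal +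
      (volume (D ∩ signedQuadrant (-1) (-1))).toReal := by
  have hfin (σ τ : ℝ) : volume (D ∩ signedQuadrant σ τ) ≠ ⊤ :=
    measure_ne_top_of_subset inter_subset_left hD
  have htwo := ENNReal.add_ne_top.2 ⟨hfin 1 1, hfin 1 (-1)⟩
  have hthree := ENNReal.add_ne_top.2 ⟨htwo, hfin (-1) 1⟩
  rw [← ENNReal.toReal_add (hfin _ _) (hfin _ _), ← ENNReal.toReal_add htwo (hfin _ _),
    ← ENNReal.toReal_add hthree (hfin _ _)]
  exact ENNReal.toReal_mono (ENNReal.add_ne_top.2 ⟨hthree, hfin _ _⟩)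
    (volume_le_sum_signedQuadrant D)

theorem sub_le_volume_inter_signedQuadrant {D : Set (ℝ × ℝ)} (hD : volume D ≠ ⊤) {a : ℝ}
    (ha : ∀ σ τ : ℝ, IsSign σ → IsSign τ → (volume (D ∩ signedQuadrant σ τ)).toReal ≤ a)
    {σ τ : ℝ} (hσ : IsSign σ) (hτ : IsSign τ) :
    (volume D).toReal - 3 * a ≤ (volume (D ∩ signedQuadrant σ τ)).toReal := by
  have hsum := toReal_volume_le_sum_signedQuadrant hD
  have hpp := ha 1 1 .one .one
  have hpm := ha 1 (-1) .one .neg_one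
  have hmp := ha (-1) 1 .neg_one .one
  have hmm := ha (-1) (-1) .neg_one .neg_one
  rcases hσ with rfl | rfl <;> rcases hτ with rfl | rfl <;> linarith

/-- The Euclidean norm whose unit disc is the ellipse `x² / ρ + ρ y² ≤ 1`. -/
def ellNorm (ρ x y : ℝ) : ℝ := √(x ^ 2 / ρ + ρ * y ^ 2)

theorem mul_sqrt_slope_eq_ellNorm {ρ x y : ℝ} (hx : 0 < x) :
    x * √(1 / ρ + ρ * (y / x) ^ 2) = ellNorm ρ x y := by
  rw [ellNorm, ← Real.sqrt_sq hx.le, ← Real.sqrt_mul (sq_nonneg _), Real.sqrt_sq hx.le]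
  congr 1
  field_simp

theorem ellNorm_one_div (ρ x y : ℝ) : ellNorm (1 / ρ) y x = ellNorm ρ x y := by
  rw [ellNorm, ellNorm, one_div, div_inv_eq_mul, add_comm]
  ring_nf

theorem ellNorm_sign_mul (ρ : ℝ) {σ τ : ℝ} (hσ : IsSign σ) (hτ : IsSign τ) (x y : ℝ) :
    ellNorm ρ (σ * x) (τ * y) = ellNorm ρ x y := by
  simp only [ellNorm, mul_pow, pow_two σ, pow_two τ, hσ.mul_self, hτ.mul_self, one_mul]

theorem sq_mul_ellNorm_le {ρ ρ' q x y : ℝ} (hρ : 0 < ρ) (hρ' : 0 < ρ')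
    (h : q ^ 4 * ρ ≤ ρ') (h' : q ^ 4 * ρ' ≤ ρ) : q ^ 2 * ellNorm ρ x y ≤ ellNorm ρ' x y := by
  rw [ellNorm, ellNorm, ← Real.sqrt_sq (sq_nonneg q), ← Real.sqrt_mul (sq_nonneg _)]
  apply Real.sqrt_le_sqrt
  rw [mul_add, ← pow_mul, show 2 * 2 = 4 from rfl]
  apply add_le_add
  · rw [mul_div_assoc', div_le_div_iff₀ hρ hρ']
    linarith [mul_le_mul_of_nonneg_left h' (sq_nonneg x)]
  · linarith [mul_le_mul_of_nonneg_left h (sq_nonneg y)]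

/-- `r σ τ` is the parameter of an ellipse close to the unit body of `N` in the quadrant of signs
`σ`, `τ`, where closeness holds from both axes of that quadrant. -/
structure QuadrantsClose (N r : ℝ → ℝ → ℝ) (η : ℝ) : Prop where
  pos {σ τ : ℝ} (hσ : IsSign σ) (hτ : IsSign τ) : 0 < r σ τ
  close {σ τ : ℝ} (hσ : IsSign σ) (hτ : IsSign τ) :
    SectorClose (fun t => N σ (τ * t)) (r σ τ) η
  close_swap {σ τ : ℝ} (hσ : IsSign σ) (hτ : IsSign τ) :
    SectorClose (fun t => N (σ * t) τ) (1 / r σ τ) η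

/-- No quadrant of the body of `M` has area above `π / 4`, so none falls below `π / 4 - π * δ`. -/
theorem exists_quadrantsClose {N M : ℝ → ℝ → ℝ} (hN : IsPlaneGauge N) (hM : IsPlaneGauge M)
    (hNM : ∀ x y u w, x * u + y * w ≤ N x y * M u w)
    (hA : ∀ σ τ : ℝ, IsSign σ → IsSign τ →
      volume ({p : ℝ × ℝ | N p.1 p.2 ≤ 1} ∩ signedQuadrant σ τ) = ENNReal.ofReal (π / 4))
    (hMfin : volume {p : ℝ × ℝ | M p.1 p.2 ≤ 1} ≠ ⊤) {δ : ℝ} (hδ : 0 < δ) (hδ1 : δ ≤ 1)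
    (hMvol : π * (1 - δ) ≤ (volume {p : ℝ × ℝ | M p.1 p.2 ≤ 1}).toReal) :
    ∃ r, QuadrantsClose N r (18 * √δ) := by
  have hpair {σ τ : ℝ} (hσ : IsSign σ) (hτ : IsSign τ) (x y u w : ℝ) :
      x * u + y * w ≤ N (σ * x) (τ * y) * M (σ * u) (τ * w) := by
    have := hNM (σ * x) (τ * y) (σ * u) (τ * w)
    rwa [mul_mul_mul_comm, mul_mul_mul_comm τ, hσ.mul_self, hτ.mul_self, one_mul, one_mul] at this
  have hfin {σ τ : ℝ} (hσ : IsSign σ) (hτ : IsSign τ) :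
      volume (quadrantPart fun x y => M (σ * x) (τ * y)) ≠ ⊤ := by
    rw [← hM.volume_inter_signedQuadrant hσ hτ]
    exact measure_ne_top_of_subset inter_subset_left hMfin
  replace hA (σ τ : ℝ) (hσ : IsSign σ) (hτ : IsSign τ) :
      volume (quadrantPart fun x y => N (σ * x) (τ * y)) = ENNReal.ofReal (π / 4) := by
    rw [← hN.volume_inter_signedQuadrant hσ hτ, hA σ τ hσ hτ]
  have hle (σ τ : ℝ) (hσ : IsSign σ) (hτ : IsSign τ) :
      (volume ({p : ℝ × ℝ | M p.1 p.2 ≤ 1} ∩ signedQuadrant σ τ)).toReal ≤ π / 4 := by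
    rw [hM.volume_inter_signedQuadrant hσ hτ]
    exact volume_quadrantPart_le (hN.reflect hσ.ne_zero hτ.ne_zero)
      (hM.reflect hσ.ne_zero hτ.ne_zero) (hpair hσ hτ) (hA σ τ hσ hτ) (hfin hσ hτ)
  have hex (σ τ : ℝ) (hσ : IsSign σ) (hτ : IsSign τ) :
      ∃ ρ, 0 < ρ ∧ SectorClose (fun t => N σ (τ * t)) ρ (18 * √δ) ∧
        SectorClose (fun t => N (σ * t) τ) (1 / ρ) (18 * √δ) := by
    have hNr := hN.reflect hσ.ne_zero hτ.ne_zero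
    have hge := sub_le_volume_inter_signedQuadrant hMfin hle hσ hτ
    rw [hM.volume_inter_signedQuadrant hσ hτ] at hge
    obtain ⟨ρ, hρ, h⟩ := exists_sectorClose hNr (hM.reflect hσ.ne_zero hτ.ne_zero) (hpair hσ hτ)
      (hA σ τ hσ hτ) (hfin hσ hτ) hδ hδ1 (by linarith)
    exact ⟨ρ, hρ, by simpa only [mul_one] using h,
      by simpa only [mul_one] using hNr.sectorClose_swap (hA σ τ hσ hτ) hρ h⟩
  choose! r hr using hex
  exact ⟨r, fun hσ hτ => (hr _ _ hσ hτ).1, fun hσ hτ => (hr _ _ hσ hτ).2.1,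
    fun hσ hτ => (hr _ _ hσ hτ).2.2⟩

namespace QuadrantsClose

variable {N r : ℝ → ℝ → ℝ} {η Δ : ℝ}

theorem swap (h : QuadrantsClose N r η) :
    QuadrantsClose (fun x y => N y x) (fun σ τ => 1 / r τ σ) η where
  pos hσ hτ := one_div_pos.2 (h.pos hτ hσ)
  close hσ hτ := h.close_swap hτ hσ
  close_swap hσ hτ := by simpa only [one_div_one_div] using h.close hτ hσ

theorem half_plane_bounds (h : QuadrantsClose N r η) (hN : IsPlaneGauge N) (hΔ : 0 < Δ)
    (hΔ1 : Δ ≤ 1 / 100) (hη : η < Δ ^ 2 / 40) {σ τ : ℝ} (hσ : IsSign σ) (hτ : IsSign τ) :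
    √(r σ τ) * (1 - 14 * Δ) ≤ √(r σ (-τ)) ∧ ∀ t, 0 ≤ t → t * r σ τ ≤ 1 →
      (1 - 8 * Δ) * √(1 / r σ τ + r σ τ * t ^ 2) ≤ N σ (τ * t) ∧
        N σ (τ * t) ≤ (1 + 6 * Δ) * √(1 / r σ τ + r σ τ * t ^ 2) := by
  have hNr := hN.reflect hσ.ne_zero hτ.ne_zero
  have hconv := hNr.convexOn_slope 1
  have hpos := hNr.slope_pos
  simp only [mul_one] at hconv hpos
  have hneg : SectorClose (fun t => N σ (τ * -t)) (r σ (-τ)) η := by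
    simpa only [neg_mul, mul_neg] using h.close hσ hτ.neg
  have := SectorClose.half_plane_bounds hconv hpos hΔ hΔ1 hη (h.pos hσ hτ) (h.pos hσ hτ.neg)
    (h.close hσ hτ) hneg
  exact ⟨this.1, this.2.2⟩

theorem sq_mul_le (h : QuadrantsClose N r η) (hN : IsPlaneGauge N) (hΔ : 0 < Δ)
    (hΔ1 : Δ ≤ 1 / 100) (hη : η < Δ ^ 2 / 40) {σ τ τ' : ℝ} (hσ : IsSign σ) (hτ : IsSign τ)
    (hτ' : IsSign τ') : (1 - 14 * Δ) ^ 2 * r σ τ ≤ r σ τ' := by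
  have hadj {τ : ℝ} (hτ : IsSign τ) : (1 - 14 * Δ) ^ 2 * r σ τ ≤ r σ (-τ) := by
    have hsqrt := (h.half_plane_bounds hN hΔ hΔ1 hη hσ hτ).1
    have hsq := pow_le_pow_left₀ (mul_nonneg (Real.sqrt_nonneg _) (by linarith)) hsqrt 2
    rwa [mul_pow, Real.sq_sqrt (h.pos hσ hτ).le, Real.sq_sqrt (h.pos hσ hτ.neg).le,
      mul_comm] at hsq
  have hself : (1 - 14 * Δ) ^ 2 * r σ τ ≤ r σ τ :=
    mul_le_of_le_one_left (h.pos hσ hτ).le (pow_le_one₀ (by linarith) (by linarith))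
  rcases hτ with rfl | rfl <;> rcases hτ' with rfl | rfl
  · exact hself
  · exact hadj .one
  · simpa only [neg_neg] using hadj .neg_one
  · exact hself

theorem pow_four_mul_le (h : QuadrantsClose N r η) (hN : IsPlaneGauge N) (hΔ : 0 < Δ)
    (hΔ1 : Δ ≤ 1 / 100) (hη : η < Δ ^ 2 / 40) {σ τ σ' τ' : ℝ} (hσ : IsSign σ) (hτ : IsSign τ)
    (hσ' : IsSign σ') (hτ' : IsSign τ') : (1 - 14 * Δ) ^ 4 * r σ τ ≤ r σ' τ' := by
  have hswap := h.swap.sq_mul_le hN.swap hΔ hΔ1 hη hτ' hσ' hσ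
  rw [mul_one_div, div_le_div_iff₀ (h.pos hσ' hτ') (h.pos hσ hτ'), one_mul] at hswap
  calc (1 - 14 * Δ) ^ 4 * r σ τ = (1 - 14 * Δ) ^ 2 * ((1 - 14 * Δ) ^ 2 * r σ τ) := by ring
    _ ≤ (1 - 14 * Δ) ^ 2 * r σ τ' :=
      mul_le_mul_of_nonneg_left (h.sq_mul_le hN hΔ hΔ1 hη hσ hτ hτ') (sq_nonneg _)
    _ ≤ r σ' τ' := hswap

theorem ellNorm_bounds_of_le (h : QuadrantsClose N r η) (hN : IsPlaneGauge N) (hΔ : 0 < Δ)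
    (hΔ1 : Δ ≤ 1 / 100) (hη : η < Δ ^ 2 / 40) {σ τ : ℝ} (hσ : IsSign σ) (hτ : IsSign τ)
    {x y : ℝ} (hx : 0 ≤ x) (hy : 0 ≤ y) (hxy : r σ τ * y ≤ x) :
    (1 - 8 * Δ) * ellNorm (r σ τ) x y ≤ N (σ * x) (τ * y) ∧
      N (σ * x) (τ * y) ≤ (1 + 6 * Δ) * ellNorm (r σ τ) x y := by
  have hr := h.pos hσ hτ
  rcases hx.eq_or_lt with rfl | hx
  · obtain rfl : y = 0 := hy.antisymm' (nonpos_of_mul_nonpos_right hxy hr)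
    have hzero : N 0 0 = 0 := by simpa using hN.homog 0 0 0 le_rfl
    simp [ellNorm, hzero]
  · have hslope := (h.half_plane_bounds hN hΔ hΔ1 hη hσ hτ).2 (y / x) (by positivity)
      (by rwa [div_mul_eq_mul_div, div_le_one hx, mul_comm])
    have hNx : N (σ * x) (τ * y) = x * N σ (τ * (y / x)) := by
      rw [← hN.homog _ _ _ hx.le]
      congr 1 <;> field_simp
    rw [hNx, ← mul_sqrt_slope_eq_ellNorm hx, mul_left_comm, mul_left_comm (1 + 6 * Δ)]
    exact ⟨mul_le_mul_of_nonneg_left hslope.1 hx.le, mul_le_mul_of_nonneg_left hslope.2 hx.le⟩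

/-- The points of slope at most `1 / r σ τ` are seen from the horizontal axis, the others from the
vertical one. -/
theorem ellNorm_bounds_of_quadrant (h : QuadrantsClose N r η) (hN : IsPlaneGauge N) (hΔ : 0 < Δ)
    (hΔ1 : Δ ≤ 1 / 100) (hη : η < Δ ^ 2 / 40) {σ τ : ℝ} (hσ : IsSign σ) (hτ : IsSign τ)
    {x y : ℝ} (hx : 0 ≤ x) (hy : 0 ≤ y) :
    (1 - 8 * Δ) * ellNorm (r σ τ) x y ≤ N (σ * x) (τ * y) ∧
      N (σ * x) (τ * y) ≤ (1 + 6 * Δ) * ellNorm (r σ τ) x y := by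
  have hr := h.pos hσ hτ
  rcases le_or_gt (r σ τ * y) x with hxy | hxy
  · exact h.ellNorm_bounds_of_le hN hΔ hΔ1 hη hσ hτ hx hy hxy
  · have := h.swap.ellNorm_bounds_of_le hN.swap hΔ hΔ1 hη hτ hσ hy hx
      (by rw [one_div_mul_eq_div, div_le_iff₀' hr]; exact hxy.le)
    simpa only [ellNorm_one_div] using this

theorem ellNorm_bounds (h : QuadrantsClose N r η) (hN : IsPlaneGauge N) (hΔ : 0 < Δ)
    (hΔ1 : Δ ≤ 1 / 100) (hη : η < Δ ^ 2 / 40) (x y : ℝ) :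
    (1 - 8 * Δ) * (1 - 14 * Δ) ^ 2 * ellNorm (r 1 1) x y ≤ N x y ∧
      (1 - 14 * Δ) ^ 2 * N x y ≤ (1 + 6 * Δ) * ellNorm (r 1 1) x y := by
  obtain ⟨σ, hσ, hx⟩ := exists_isSign_mul_nonneg x
  obtain ⟨τ, hτ, hy⟩ := exists_isSign_mul_nonneg y
  obtain ⟨hlower, hupper⟩ := h.ellNorm_bounds_of_quadrant hN hΔ hΔ1 hη hσ hτ hx hy
  rw [hσ.mul_self_mul, hτ.mul_self_mul, ellNorm_sign_mul _ hσ hτ] at hlower hupper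
  have hr := h.pos hσ hτ
  have hr1 := h.pos .one .one
  have hle := h.pow_four_mul_le hN hΔ hΔ1 hη .one .one hσ hτ
  have hge := h.pow_four_mul_le hN hΔ hΔ1 hη hσ hτ .one .one
  constructor
  · calc (1 - 8 * Δ) * (1 - 14 * Δ) ^ 2 * ellNorm (r 1 1) x y
        = (1 - 8 * Δ) * ((1 - 14 * Δ) ^ 2 * ellNorm (r 1 1) x y) := mul_assoc _ _ _
      _ ≤ (1 - 8 * Δ) * ellNorm (r σ τ) x y :=
        mul_le_mul_of_nonneg_left (sq_mul_ellNorm_le hr1 hr hle hge) (by linarith)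
      _ ≤ N x y := hlower
  · calc (1 - 14 * Δ) ^ 2 * N x y
        ≤ (1 - 14 * Δ) ^ 2 * ((1 + 6 * Δ) * ellNorm (r σ τ) x y) := by gcongr
      _ = (1 + 6 * Δ) * ((1 - 14 * Δ) ^ 2 * ellNorm (r σ τ) x y) := by ring
      _ ≤ (1 + 6 * Δ) * ellNorm (r 1 1) x y :=
        mul_le_mul_of_nonneg_left (sq_mul_ellNorm_le hr hr1 hge hle) (by linarith)

end QuadrantsClose

/-! ### Polarity in coordinates -/

theorem gauge_le_one_iff_mem_of_isClosed {E : Type*} [AddCommGroup E] [Module ℝ E]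
    [TopologicalSpace E] [IsTopologicalAddGroup E] [ContinuousSMul ℝ E] {C : Set E}
    (hC : IsClosed C) (hcv : Convex ℝ C) (h0 : C ∈ 𝓝 0) (p : E) : gauge C p ≤ 1 ↔ p ∈ C := by
  rw [gauge_le_one_iff_mem_closure hcv h0, hC.closure_eq]

section PlanePolar

variable {C : Set (ℝ × ℝ)}

theorem isPlaneGauge_gauge (hC : Bornology.IsBounded C) (hcv : Convex ℝ C)
    (h0 : C ∈ 𝓝 (0 : ℝ × ℝ)) : IsPlaneGauge fun x y => gauge C (x, y) where
  cont := continuous_gauge hcv h0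
  pos x y h := by
    refine (gauge_pos (absorbent_nhds_zero h0)
      (NormedSpace.isVonNBounded_of_isBounded ℝ hC)).2 fun hxy => ?_
    simp_all
  homog r x y hr := gauge_smul_of_nonneg hr (x, y)
  add_le x y u w := gauge_add_le hcv (absorbent_nhds_zero h0) (x, y) (u, w)

/-- The polar of a subset of the coordinate plane. -/
def planePolar (C : Set (ℝ × ℝ)) : Set (ℝ × ℝ) := {q | ∀ p ∈ C, p.1 * q.1 + p.2 * q.2 ≤ 1}

theorem convex_planePolar (C : Set (ℝ × ℝ)) : Convex ℝ (planePolar C) := by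
  intro u hu v hv a b ha hb hab p hp
  calc p.1 * (a * u.1 + b * v.1) + p.2 * (a * u.2 + b * v.2)
      = a * (p.1 * u.1 + p.2 * u.2) + b * (p.1 * v.1 + p.2 * v.2) := by ring
    _ ≤ a * 1 + b * 1 := by gcongr; exacts [hu p hp, hv p hp]
    _ = 1 := by rw [mul_one, mul_one, hab]

theorem isClosed_planePolar (C : Set (ℝ × ℝ)) : IsClosed (planePolar C) := by
  simp only [planePolar, ofPred_forall]
  exact isClosed_biInter fun p _ => isClosed_le (by fun_prop) continuous_const

theorem isCompact_planePolar (h0 : C ∈ 𝓝 (0 : ℝ × ℝ)) : IsCompact (planePolar C) := by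
  obtain ⟨r, hr, hb⟩ := Metric.nhds_basis_closedBall.mem_iff.1 h0
  refine Metric.isCompact_of_isClosed_isBounded (isClosed_planePolar C)
    ((Metric.isBounded_closedBall (x := (0 : ℝ × ℝ)) (r := 1 / r)).subset fun q hq => ?_)
  have hmem {x y : ℝ} (hx : |x| ≤ r) (hy : |y| ≤ r) : x * q.1 + y * q.2 ≤ 1 :=
    hq (x, y) (hb (by simp [Prod.norm_def, hx, hy]))
  have hpos : |r| ≤ r := (abs_of_pos hr).le
  have hneg : |-r| ≤ r := by rwa [abs_neg]
  have hzero : |(0 : ℝ)| ≤ r := by simpa using hr.le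
  have hright := hmem hpos hzero
  have hleft := hmem hneg hzero
  have hup := hmem hzero hpos
  have hdown := hmem hzero hneg
  rw [mem_closedBall_zero_iff, Prod.norm_def, sup_le_iff, Real.norm_eq_abs, Real.norm_eq_abs,
    abs_le, abs_le, ← neg_div, div_le_iff₀ hr, le_div_iff₀ hr, div_le_iff₀ hr, le_div_iff₀ hr]
  refine ⟨⟨?_, ?_⟩, ?_, ?_⟩ <;> linarith

theorem planePolar_mem_nhds (hC : Bornology.IsBounded C) : planePolar C ∈ 𝓝 (0 : ℝ × ℝ) := by
  obtain ⟨R, hR, hb⟩ := hC.exists_pos_norm_le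
  refine mem_of_superset (Metric.closedBall_mem_nhds 0 (ε := 1 / (2 * R)) (by positivity))
    fun q hq p hp => ?_
  have hpR := hb p hp
  simp only [mem_closedBall_zero_iff, Prod.norm_def, Real.norm_eq_abs, sup_le_iff] at hq hpR
  have hhalf {x u : ℝ} (hx : |x| ≤ R) (hu : |u| ≤ 1 / (2 * R)) : x * u ≤ 1 / 2 :=
    calc x * u ≤ |x| * |u| := (le_abs_self _).trans (abs_mul x u).le
      _ ≤ R * (1 / (2 * R)) := mul_le_mul hx hu (abs_nonneg _) hR.le
      _ = 1 / 2 := by field_simp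
  linarith [hhalf hpR.1 hq.1, hhalf hpR.2 hq.2]

theorem le_gauge_mul_gauge_planePolar (hC : IsCompact C) (hcv : Convex ℝ C)
    (h0 : C ∈ 𝓝 (0 : ℝ × ℝ)) (x y u w : ℝ) :
    x * u + y * w ≤ gauge C (x, y) * gauge (planePolar C) (u, w) := by
  have hP := isCompact_planePolar h0
  have hPcv := convex_planePolar C
  have hP0 := planePolar_mem_nhds hC.isBounded
  have hdecomp {D : Set (ℝ × ℝ)} (hD : IsCompact D) (hDcv : Convex ℝ D) (hD0 : D ∈ 𝓝 0)
      (p : ℝ × ℝ) : ∃ p' ∈ D, p = gauge D p • p' := by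
    rcases eq_or_ne p 0 with rfl | hp
    · exact ⟨0, mem_of_mem_nhds hD0, by simp⟩
    have hpos := (gauge_pos (absorbent_nhds_zero hD0)
      (NormedSpace.isVonNBounded_of_isBounded ℝ hD.isBounded)).2 hp
    refine ⟨(gauge D p)⁻¹ • p, ?_, (smul_inv_smul₀ hpos.ne' p).symm⟩
    rw [← gauge_le_one_iff_mem_of_isClosed hD.isClosed hDcv hD0,
      gauge_smul_of_nonneg (inv_nonneg.2 hpos.le), smul_eq_mul, inv_mul_cancel₀ hpos.ne']
  obtain ⟨p, hp, hxy⟩ := hdecomp hC hcv h0 (x, y)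
  obtain ⟨q, hq, huw⟩ := hdecomp hP hPcv hP0 (u, w)
  have hscale : gauge C (x, y) * gauge (planePolar C) (u, w) * (p.1 * q.1 + p.2 * q.2) =
      x * u + y * w := by
    rw [Prod.ext_iff] at hxy huw
    simp only [Prod.smul_fst, Prod.smul_snd, smul_eq_mul] at hxy huw
    linear_combination (-u) * hxy.1 - w * hxy.2 - gauge C (x, y) * p.1 * huw.1 -
      gauge C (x, y) * p.2 * huw.2
  rw [← hscale]
  exact mul_le_of_le_one_right (mul_nonneg (gauge_nonneg _) (gauge_nonneg _)) (hq p hp)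

theorem exists_ellNorm_of_quartered (hC : IsCompact C) (hcv : Convex ℝ C)
    (h0 : C ∈ 𝓝 (0 : ℝ × ℝ))
    (hA : ∀ σ τ : ℝ, IsSign σ → IsSign τ →
      volume (C ∩ signedQuadrant σ τ) = ENNReal.ofReal (π / 4))
    {δ Δ : ℝ} (hδ : 0 < δ) (hδ1 : δ ≤ 1)
    (hvol : π * (1 - δ) ≤ (volume (planePolar C)).toReal)
    (hΔ : 0 < Δ) (hΔ1 : Δ ≤ 1 / 100) (hη : 18 * √δ < Δ ^ 2 / 40) :
    ∃ ρ, 0 < ρ ∧ ∀ p : ℝ × ℝ,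
      ((1 + 6 * Δ) * ellNorm ρ p.1 p.2 ≤ (1 - 14 * Δ) ^ 2 → p ∈ C) ∧
        (p ∈ C → (1 - 8 * Δ) * (1 - 14 * Δ) ^ 2 * ellNorm ρ p.1 p.2 ≤ 1) := by
  have hP := isCompact_planePolar h0
  have hP0 := planePolar_mem_nhds hC.isBounded
  have hmem := gauge_le_one_iff_mem_of_isClosed hC.isClosed hcv h0
  have hbody : {p : ℝ × ℝ | gauge C (p.1, p.2) ≤ 1} = C := ext hmem
  have hpolar : {p : ℝ × ℝ | gauge (planePolar C) (p.1, p.2) ≤ 1} = planePolar C :=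
    ext (gauge_le_one_iff_mem_of_isClosed hP.isClosed (convex_planePolar C) hP0)
  have hN := isPlaneGauge_gauge hC.isBounded hcv h0
  obtain ⟨r, hr⟩ := exists_quadrantsClose hN
    (isPlaneGauge_gauge hP.isBounded (convex_planePolar C) hP0)
    (le_gauge_mul_gauge_planePolar hC hcv h0) (by rwa [hbody])
    (by rw [hpolar]; exact hP.measure_lt_top.ne) hδ hδ1 (by rwa [hpolar])
  refine ⟨r 1 1, hr.pos .one .one, fun p => ⟨fun hp => (hmem p).1 ?_, fun hp => ?_⟩⟩
  · have hq : 0 < (1 - 14 * Δ) ^ 2 := pow_pos (by linarith) 2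
    rw [← mul_le_mul_iff_right₀ hq, mul_one]
    exact (hr.ellNorm_bounds hN hΔ hΔ1 hη p.1 p.2).2.trans hp
  · exact (hr.ellNorm_bounds hN hΔ hΔ1 hη p.1 p.2).1.trans ((hmem p).2 hp)

end PlanePolar

/-! ### Medians of functions on a set -/

/-- `b` is a median of `h` on `A`: the level line `h = b` halves `A`, if it is a null set. -/
def IsMedian {α : Type*} [MeasurableSpace α] (μ : Measure α) (A : Set α) (h : α → ℝ) (b : ℝ) :
    Prop := μ.real (A ∩ {p | h p ≤ b}) = μ.real A / 2

section Median

variable {α : Type*} [MeasurableSpace α] {μ : Measure α} {A : Set α}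

theorem continuous_measureReal_inter_le {X : Type*} [TopologicalSpace X]
    [FirstCountableTopology X] (hA : μ A ≠ ⊤) {h : X → α → ℝ} {b : X → ℝ}
    (hm : ∀ x, Measurable (h x)) (hc : ∀ p, Continuous fun x => h x p) (hb : Continuous b)
    (hnull : ∀ x, μ {p | h x p = b x} = 0) :
    Continuous fun x => μ.real (A ∩ {p | h x p ≤ b x}) := by
  have : IsFiniteMeasure (μ.restrict A) := isFiniteMeasure_restrict.2 hA
  have hms (x : X) : MeasurableSet {p | h x p ≤ b x} := measurableSet_le (hm x) measurable_const
  have hintegral (x : X) : μ.real (A ∩ {p | h x p ≤ b x}) =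
      ∫ p, ({p | h x p ≤ b x}).indicator (1 : α → ℝ) p ∂(μ.restrict A) := by
    rw [integral_indicator_one (hms x), inter_comm, measureReal_restrict_apply (hms x)]
  simp_rw [hintegral]
  refine continuous_iff_continuousAt.2 fun x₀ => continuousAt_of_dominated (bound := fun _ => 1)
    (.of_forall fun x => (measurable_one.indicator (hms x)).aestronglyMeasurable)
    (.of_forall fun x => .of_forall fun p => ?_) (integrable_const _) ?_
  · exact (norm_indicator_le_norm_self _ _).trans (by simp)
  · have hne : ∀ᵐ p ∂(μ.restrict A), p ∉ {p | h x₀ p = b x₀} :=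
      ae_restrict_of_ae (measure_eq_zero_iff_ae_notMem.1 (hnull x₀))
    filter_upwards [hne] with p hp
    rcases lt_or_gt_of_ne hp with hlt | hgt
    · refine (continuousAt_const (y := (1 : ℝ))).congr ?_
      filter_upwards [(hc p).continuousAt.eventually_lt hb.continuousAt hlt] with x hx
      simp [indicator, hx.le]
    · refine (continuousAt_const (y := (0 : ℝ))).congr ?_
      filter_upwards [hb.continuousAt.eventually_lt (hc p).continuousAt hgt] with x hx
      simp [indicator, hx]

theorem eventually_lt_measureReal_inter_ge (hA : μ A ≠ ⊤) {f : α → ℝ} {v : ℝ}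
    (hv : v < μ.real (A ∩ {p | 0 < f p})) :
    ∀ᶠ c in 𝓝[>] (0 : ℝ), v < μ.real (A ∩ {p | c ≤ f p}) := by
  have hfin (c : ℝ) : μ (A ∩ {p | c ≤ f p}) ≠ ⊤ := measure_ne_top_of_subset inter_subset_left hA
  have hmono {c d : ℝ} (hcd : c ≤ d) : A ∩ {p | d ≤ f p} ⊆ A ∩ {p | c ≤ f p} :=
    inter_subset_inter_right _ fun _ hp => le_trans hcd hp
  have hunion : ⋃ n : ℕ, A ∩ {p | 1 / ((n : ℝ) + 1) ≤ f p} = A ∩ {p | 0 < f p} := by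
    refine (inter_iUnion A _).symm.trans (congrArg (A ∩ ·) (ext fun p => mem_iUnion.trans ?_))
    exact ⟨fun ⟨n, (hn : 1 / ((n : ℝ) + 1) ≤ f p)⟩ => Nat.one_div_pos_of_nat.trans_le hn,
      fun (hp : 0 < f p) => let ⟨n, hn⟩ := exists_nat_one_div_lt hp; ⟨n, hn.le⟩⟩
  have hlim := tendsto_measure_iUnion_atTop (μ := μ)
    (s := fun n : ℕ => A ∩ {p | 1 / ((n : ℝ) + 1) ≤ f p})
    fun _ _ hmn => hmono (Nat.one_div_le_one_div hmn)
  rw [hunion] at hlim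
  obtain ⟨n, hn⟩ := (((ENNReal.tendsto_toReal
    (measure_ne_top_of_subset inter_subset_left hA)).comp hlim).eventually_const_lt hv).exists
  filter_upwards [Ioc_mem_nhdsGT (Nat.one_div_pos_of_nat (n := n))] with c hc
  exact hn.trans_le (measureReal_mono (hmono hc.2) (hfin c))

theorem exists_isMedian (hA : μ A ≠ ⊤) {h : α → ℝ} (hm : Measurable h)
    (hnull : ∀ b, μ {p | h p = b} = 0) {R : ℝ} (hR : ∀ p ∈ A, |h p| ≤ R) :
    ∃ b, IsMedian μ A h b := by
  have hcont : Continuous fun b => μ.real (A ∩ {p | h p ≤ b}) :=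
    continuous_measureReal_inter_le (h := fun _ => h) (b := id) hA (fun _ => hm)
      (fun _ => continuous_const) continuous_id hnull
  have hlow : A ∩ {p | h p ≤ -R - 1} = ∅ := eq_empty_of_forall_notMem fun p hp => by
    linarith [(abs_le.1 (hR p hp.1)).1, mem_ofPred_eq.mp hp.2]
  have hhigh : A ∩ {p | h p ≤ R} = A := inter_eq_left.2 fun p hp => (abs_le.1 (hR p hp)).2
  have hnonneg : 0 ≤ μ.real A := measureReal_nonneg
  refine intermediate_value_univ (-R - 1) R hcont ⟨?_, ?_⟩
  · simp only [hlow, measureReal_empty]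
    linarith
  · simp only [hhigh]
    linarith

namespace IsMedian

variable {h : α → ℝ} {b : ℝ}

theorem measureReal_inter_sign_mul_pos (hb : IsMedian μ A h b) (hA : μ A ≠ ⊤) (hm : Measurable h)
    (hnull : μ {p | h p = b} = 0) {σ : ℝ} (hσ : IsSign σ) :
    μ.real (A ∩ {p | 0 < σ * (h p - b)}) = μ.real A / 2 := by
  unfold IsMedian at hb
  rcases hσ with rfl | rfl
  · have hsplit := measureReal_inter_add_sdiff (μ := μ) (s := A)
      (measurableSet_le hm measurable_const : MeasurableSet {p | h p ≤ b}) hA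
    have hdiff : A \ {p | h p ≤ b} = A ∩ {p | 0 < 1 * (h p - b)} := by
      ext p
      simp only [Set.mem_sdiff, mem_inter_iff, mem_ofPred_eq, one_mul, sub_pos, not_le]
    rw [← hdiff]
    linarith
  · rw [← hb]
    refine measureReal_congr ?_
    filter_upwards [measure_eq_zero_iff_ae_notMem.1 hnull] with p hp
    have : 0 < -1 * (h p - b) ↔ h p ≤ b := by
      rw [neg_one_mul, neg_sub, sub_pos]
      exact ⟨le_of_lt, fun hle => lt_of_le_of_ne hle hp⟩
    exact propext (and_congr_right fun _ => this)

theorem le_of_subset (hb : IsMedian μ A h b) (hA : μ A ≠ ⊤) {S : Set α} {t : ℝ} (hSA : S ⊆ A)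
    (hS : μ.real A / 2 < μ.real S) (ht : ∀ p ∈ S, h p ≤ t) : b ≤ t := by
  by_contra! hlt
  have : μ.real S ≤ μ.real (A ∩ {p | h p ≤ b}) :=
    measureReal_mono (fun p hp => ⟨hSA hp, (ht p hp).trans hlt.le⟩)
      (measure_ne_top_of_subset inter_subset_left hA)
  exact (hS.trans_le this).ne' hb

theorem ge_of_subset (hb : IsMedian μ A h b) (hA : μ A ≠ ⊤) (hm : Measurable h) {S : Set α} {t : ℝ}
    (hSA : S ⊆ A) (hS : μ.real A / 2 < μ.real S) (ht : ∀ p ∈ S, t ≤ h p) : t ≤ b := by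
  by_contra! hlt
  have hsplit := measureReal_inter_add_sdiff (μ := μ) (s := A)
    (measurableSet_le hm measurable_const : MeasurableSet {p | h p ≤ b}) hA
  have hle : μ.real S ≤ μ.real (A \ {p | h p ≤ b}) :=
    measureReal_mono (fun p hp => ⟨hSA hp, not_le.2 (hlt.trans_le (ht p hp))⟩)
      (measure_ne_top_of_subset sdiff_subset hA)
  unfold IsMedian at hb
  linarith

end IsMedian

end Median

section ConvexMedian

variable {E : Type*} [NormedAddCommGroup E] [NormedSpace ℝ E] [FiniteDimensional ℝ E]
  [MeasurableSpace E] [BorelSpace E] {μ : Measure E} [μ.IsAddHaarMeasure] {A : Set E}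

theorem nonempty_interior_inter_of_measureReal_pos (hcv : Convex ℝ A) {S : Set E}
    (hS : 0 < μ.real (A ∩ S)) : (interior A ∩ S).Nonempty := by
  by_contra hempty
  have hsub : A ∩ S ⊆ frontier A := fun p hp =>
    ⟨subset_closure hp.1, fun hpi => hempty ⟨p, hpi, hp.2⟩⟩
  refine hS.ne' ?_
  rw [measureReal_def, measure_mono_null hsub (hcv.addHaar_frontier μ), ENNReal.toReal_zero]

theorem measureReal_inter_le_lt (hA : μ A ≠ ⊤) (hcv : Convex ℝ A) {h : E → ℝ} (hc : Continuous h)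
    {b b' : ℝ} (hb : b < b') (hlow : 0 < μ.real (A ∩ {p | h p ≤ b}))
    (hhigh : μ.real (A ∩ {p | h p ≤ b'}) < μ.real A) :
    μ.real (A ∩ {p | h p ≤ b}) < μ.real (A ∩ {p | h p ≤ b'}) := by
  have hms (b : ℝ) : MeasurableSet {p | h p ≤ b} := measurableSet_le hc.measurable measurable_const
  have hfin {S : Set E} (hS : S ⊆ A) : μ S ≠ ⊤ := measure_ne_top_of_subset hS hA
  obtain ⟨p, hp, hpb⟩ := nonempty_interior_inter_of_measureReal_pos hcv hlow
  obtain ⟨q, hq, hqb⟩ : (interior A ∩ {p | h p ≤ b'}ᶜ).Nonempty := by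
    refine nonempty_interior_inter_of_measureReal_pos (μ := μ) hcv ?_
    rw [← sdiff_eq]
    linarith [measureReal_inter_add_sdiff (μ := μ) (s := A) (hms b') hA]
  rw [mem_compl_iff, mem_ofPred_eq, not_le] at hqb
  rw [mem_ofPred_eq] at hpb
  obtain ⟨w, hw, hwb⟩ := hcv.interior.isPreconnected.intermediate_value hp hq hc.continuousOn
    (⟨by linarith, by linarith⟩ : (b + b') / 2 ∈ Icc (h p) (h q))
  set B := interior A ∩ {p | b < h p ∧ h p < b'}
  have hBA : B ⊆ A := inter_subset_left.trans interior_subset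
  have hBopen : IsOpen B :=
    isOpen_interior.inter ((isOpen_lt continuous_const hc).inter (isOpen_lt hc continuous_const))
  have hBpos : 0 < μ.real B :=
    ENNReal.toReal_pos (hBopen.measure_pos μ ⟨w, hw, by linarith, by linarith⟩).ne' (hfin hBA)
  have hdisj : Disjoint (A ∩ {p | h p ≤ b}) B :=
    disjoint_left.2 fun p hpb hpB => hpb.2.not_gt hpB.2.1
  have hsub : A ∩ {p | h p ≤ b} ∪ B ⊆ A ∩ {p | h p ≤ b'} :=
    union_subset (inter_subset_inter_right _ fun _ hp => le_trans hp hb.le)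
      fun p hpB => ⟨hBA hpB, hpB.2.2.le⟩
  calc μ.real (A ∩ {p | h p ≤ b}) < μ.real (A ∩ {p | h p ≤ b}) + μ.real B :=
        lt_add_of_pos_right _ hBpos
    _ = μ.real (A ∩ {p | h p ≤ b} ∪ B) :=
        (measureReal_union hdisj hBopen.measurableSet (hfin inter_subset_left) (hfin hBA)).symm
    _ ≤ μ.real (A ∩ {p | h p ≤ b'}) := measureReal_mono hsub (hfin inter_subset_left)

theorem IsMedian.measureReal_lt {h : E → ℝ} {b c : ℝ} (hb : IsMedian μ A h b) (hA : μ A ≠ ⊤)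
    (hcv : Convex ℝ A) (hpos : 0 < μ.real A) (hc : Continuous h) (hcb : c < b) :
    μ.real (A ∩ {p | h p ≤ c}) < μ.real A / 2 := by
  unfold IsMedian at hb
  by_contra! hle
  have := measureReal_inter_le_lt hA hcv hc hcb (by linarith) (by linarith)
  linarith

theorem IsMedian.lt_measureReal {h : E → ℝ} {b c : ℝ} (hb : IsMedian μ A h b) (hA : μ A ≠ ⊤)
    (hcv : Convex ℝ A) (hpos : 0 < μ.real A) (hc : Continuous h) (hbc : b < c) :
    μ.real A / 2 < μ.real (A ∩ {p | h p ≤ c}) := by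
  unfold IsMedian at hb
  by_contra! hle
  have := measureReal_inter_le_lt hA hcv hc hbc (by linarith) (by linarith)
  linarith

theorem continuous_of_isMedian {X : Type*} [TopologicalSpace X] [FirstCountableTopology X]
    (hA : μ A ≠ ⊤) (hcv : Convex ℝ A) (hpos : 0 < μ.real A) {h : X → E → ℝ}
    (hc : ∀ x, Continuous (h x)) (hx : ∀ p, Continuous fun x => h x p)
    (hnull : ∀ x c, μ {p | h x p = c} = 0) {β : X → ℝ} (hβ : ∀ x, IsMedian μ A (h x) (β x)) :
    Continuous β := by
  have hcont (c : ℝ) : Continuous fun x => μ.real (A ∩ {p | h x p ≤ c}) :=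
    continuous_measureReal_inter_le hA (fun x => (hc x).measurable) hx continuous_const
      fun x => hnull x c
  have hmono (x : X) {c c' : ℝ} (hcc' : c ≤ c') :
      μ.real (A ∩ {p | h x p ≤ c}) ≤ μ.real (A ∩ {p | h x p ≤ c'}) :=
    measureReal_mono (inter_subset_inter_right _ fun _ hp => le_trans hp hcc')
      (measure_ne_top_of_subset inter_subset_left hA)
  refine continuous_iff_continuousAt.2 fun x₀ => tendsto_order.2 ⟨fun c hcβ => ?_, fun c hcβ => ?_⟩
  · filter_upwards [(hcont c).continuousAt.eventually_lt continuousAt_const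
      ((hβ x₀).measureReal_lt hA hcv hpos (hc x₀) hcβ)] with x hlt
    by_contra! hle
    exact (hmono x hle).not_gt (hlt.trans_eq (hβ x).symm)
  · filter_upwards [continuousAt_const.eventually_lt (hcont c).continuousAt
      ((hβ x₀).lt_measureReal hA hcv hpos (hc x₀) hcβ)] with x hlt
    by_contra! hle
    exact (hmono x hle).not_gt ((hβ x).trans_lt hlt)

end ConvexMedian

/-! ### Quartering a convex body -/

/-- The height at which the line of slope `m` through `p` meets the vertical line `x = a`. -/
def heightAt (a m : ℝ) (p : ℝ × ℝ) : ℝ := p.2 - m * (p.1 - a)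

theorem continuous_heightAt (a m : ℝ) : Continuous (heightAt a m) := by
  unfold heightAt
  fun_prop

theorem volume_heightAt_eq (a m b : ℝ) : volume {p : ℝ × ℝ | heightAt a m p = b} = 0 := by
  rw [Measure.volume_eq_prod, Measure.measure_prod_null
    (measurableSet_eq_fun (continuous_heightAt a m).measurable measurable_const)]
  refine .of_forall fun x => ?_
  have hslice : Prod.mk x ⁻¹' {p : ℝ × ℝ | heightAt a m p = b} = {b + m * (x - a)} :=
    ext fun _ => sub_eq_iff_eq_add
  simp only [hslice, measure_singleton, Pi.zero_apply]

theorem volume_fst_eq (a : ℝ) : volume {p : ℝ × ℝ | p.1 = a} = 0 := by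
  have hprod : {p : ℝ × ℝ | p.1 = a} = {a} ×ˢ univ := by ext; simp
  rw [hprod, Measure.volume_eq_prod, Measure.prod_prod, measure_singleton, zero_mul]

theorem exists_isMedian_heightAt {A : Set (ℝ × ℝ)} (hA : Bornology.IsBounded A) (a m : ℝ) :
    ∃ b, IsMedian volume A (heightAt a m) b := by
  have hbdd : Bornology.IsBounded (heightAt a m '' closure A) :=
    (hA.isCompact_closure.image (continuous_heightAt a m)).isBounded
  obtain ⟨R, hR⟩ := hbdd.exists_norm_le
  exact exists_isMedian hA.measure_lt_top.ne (continuous_heightAt a m).measurable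
    (volume_heightAt_eq a m) fun p hp => hR _ (mem_image_of_mem _ (subset_closure hp))

theorem median_heightAt_steep {A S : Set (ℝ × ℝ)} (hA : volume A ≠ ⊤) (hSA : S ⊆ A)
    (hS : volume.real A / 2 < volume.real S) {a c R σ : ℝ} (hc : 0 < c)
    (hR : ∀ p ∈ S, |p.2| ≤ R) (hσ : ∀ p ∈ S, c ≤ σ * (p.1 - a)) {β : ℝ → ℝ}
    (hβ : ∀ m, IsMedian volume A (heightAt a m) (β m)) :
    β (R / c * σ) ≤ 0 ∧ 0 ≤ β (-(R / c * σ)) := by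
  have hsteep (p : ℝ × ℝ) (hp : p ∈ S) : |p.2| ≤ R / c * (σ * (p.1 - a)) := by
    have hR0 := (abs_nonneg _).trans (hR p hp)
    calc |p.2| ≤ R / c * c := by rw [div_mul_cancel₀ _ hc.ne']; exact hR p hp
      _ ≤ R / c * (σ * (p.1 - a)) :=
        mul_le_mul_of_nonneg_left (hσ p hp) (div_nonneg hR0 hc.le)
  constructor
  · refine (hβ _).le_of_subset hA hSA hS fun p hp => ?_
    unfold heightAt
    linarith [hsteep p hp, le_abs_self p.2]
  · refine (hβ _).ge_of_subset hA (continuous_heightAt a _).measurable hSA hS fun p hp => ?_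
    unfold heightAt
    linarith [hsteep p hp, neg_abs_le p.2]

/-- For steep slopes of opposite signs, the halving lines of `A` and `B` meet the line `x = a`,
which separates the two sets, in opposite orders. -/
theorem exists_common_median_heightAt {A B : Set (ℝ × ℝ)} (hA : Bornology.IsBounded A)
    (hB : Bornology.IsBounded B) (hAcv : Convex ℝ A) (hBcv : Convex ℝ B)
    (hApos : 0 < volume.real A) (hBpos : 0 < volume.real B) {a c : ℝ} (hc : 0 < c)
    (hAc : volume.real A / 2 < volume.real (A ∩ {p | c ≤ 1 * (p.1 - a)}))
    (hBc : volume.real B / 2 < volume.real (B ∩ {p | c ≤ -1 * (p.1 - a)})) :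
    ∃ m b, IsMedian volume A (heightAt a m) b ∧ IsMedian volume B (heightAt a m) b := by
  have hAfin := hA.measure_lt_top (μ := volume).ne
  have hBfin := hB.measure_lt_top (μ := volume).ne
  choose α hα using exists_isMedian_heightAt hA a
  choose β hβ using exists_isMedian_heightAt hB a
  obtain ⟨R, hR⟩ := (hA.union hB).exists_norm_le
  have hslope (p : ℝ × ℝ) : Continuous fun m => heightAt a m p := by
    unfold heightAt
    fun_prop
  have hαcont : Continuous α := continuous_of_isMedian hAfin hAcv hApos (continuous_heightAt a)
    hslope (volume_heightAt_eq a) hα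
  have hβcont : Continuous β := continuous_of_isMedian hBfin hBcv hBpos (continuous_heightAt a)
    hslope (volume_heightAt_eq a) hβ
  obtain ⟨hα_nonpos, hα_nonneg⟩ := median_heightAt_steep (R := R) hAfin inter_subset_left hAc hc
    (fun p hp => (norm_snd_le p).trans (hR p (.inl hp.1))) (fun p hp => hp.2) hα
  obtain ⟨hβ_nonpos, hβ_nonneg⟩ := median_heightAt_steep (R := R) hBfin inter_subset_left hBc hc
    (fun p hp => (norm_snd_le p).trans (hR p (.inr hp.1))) (fun p hp => hp.2) hβ
  rw [mul_one] at hα_nonpos hα_nonneg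
  rw [mul_neg_one] at hβ_nonpos hβ_nonneg
  rw [neg_neg] at hβ_nonneg
  obtain ⟨m, hm⟩ : ∃ m, β m - α m = 0 :=
    intermediate_value_univ (-(R / c)) (R / c) (hβcont.sub hαcont)
      ⟨sub_nonpos.2 (hβ_nonpos.trans hα_nonneg), sub_nonneg.2 (hα_nonpos.trans hβ_nonneg)⟩
  exact ⟨m, α m, hα m, sub_eq_zero.1 hm ▸ hβ m⟩

theorem exists_quartering {K : Set (ℝ × ℝ)} (hK : IsCompact K) (hcv : Convex ℝ K)
    (hne : (interior K).Nonempty) :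
    ∃ a b m : ℝ, ∀ σ τ : ℝ, IsSign σ → IsSign τ →
      volume.real (K ∩ {p | 0 < σ * (p.1 - a)} ∩ {p | 0 < τ * (heightAt a m p - b)}) =
        volume.real K / 4 := by
  have hfin : volume K ≠ ⊤ := hK.measure_lt_top.ne
  have hV : 0 < volume.real K := ENNReal.toReal_pos
    (Measure.measure_pos_of_nonempty_interior volume hne).ne' hfin
  obtain ⟨R, hR⟩ := hK.isBounded.exists_norm_le
  obtain ⟨a, ha⟩ := exists_isMedian hfin measurable_fst volume_fst_eq
    fun p hp => (norm_fst_le p).trans (hR p hp)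
  let H (σ : ℝ) : Set (ℝ × ℝ) := K ∩ {p | 0 < σ * (p.1 - a)}
  have hHbdd (σ : ℝ) : Bornology.IsBounded (H σ) := hK.isBounded.subset inter_subset_left
  have hHcv (σ : ℝ) : Convex ℝ (H σ) := by
    have hopen : {p : ℝ × ℝ | 0 < σ * (p.1 - a)} =
        {p | σ * a < (σ • LinearMap.fst ℝ ℝ ℝ) p} := by
      ext p
      simp [mul_sub]
    exact hcv.inter (hopen ▸ convex_halfSpace_gt (LinearMap.isLinear _) _)
  have hHvol {σ : ℝ} (hσ : IsSign σ) : volume.real (H σ) = volume.real K / 2 :=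
    ha.measureReal_inter_sign_mul_pos hfin measurable_fst (volume_fst_eq a) hσ
  have hfar {σ : ℝ} (hσ : IsSign σ) : ∀ᶠ c in 𝓝[>] (0 : ℝ),
      volume.real (H σ) / 2 < volume.real (H σ ∩ {p | c ≤ σ * (p.1 - a)}) := by
    refine eventually_lt_measureReal_inter_ge (hHbdd σ).measure_lt_top.ne ?_
    rw [inter_eq_left.2 inter_subset_right]
    linarith [hHvol hσ]
  obtain ⟨c, ⟨hright, hleft⟩, hc⟩ :=
    (((hfar .one).and (hfar .neg_one)).and self_mem_nhdsWithin).exists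
  obtain ⟨m, b, hmedR, hmedL⟩ := exists_common_median_heightAt (hHbdd 1) (hHbdd (-1)) (hHcv 1)
    (hHcv (-1)) (by linarith [hHvol .one]) (by linarith [hHvol .neg_one]) hc hright hleft
  refine ⟨a, b, m, fun σ τ hσ hτ => ?_⟩
  have hmed : IsMedian volume (H σ) (heightAt a m) b := by
    rcases hσ with rfl | rfl
    exacts [hmedR, hmedL]
  rw [hmed.measureReal_inter_sign_mul_pos (hHbdd σ).measure_lt_top.ne
    (continuous_heightAt a m).measurable (volume_heightAt_eq a m b) hτ, hHvol hσ]
  ring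

/-! ### Affine changes of coordinates -/

/-- The affine bijection `p ↦ z + M p` of the coordinate plane. -/
def planeAffine (M : Matrix (Fin 2) (Fin 2) ℝ) (hM : IsUnit M.det) (z : ℝ × ℝ) :
    (ℝ × ℝ) ≃ᵃ[ℝ] ℝ × ℝ :=
  (Matrix.toLinearEquiv (Module.Basis.finTwoProd ℝ) M hM).toAffineEquiv.trans
    (AffineEquiv.constVAdd ℝ (ℝ × ℝ) z)

section PlaneAffine

variable {M : Matrix (Fin 2) (Fin 2) ℝ} {hM : IsUnit M.det}

theorem planeAffine_apply (z p : ℝ × ℝ) :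
    planeAffine M hM z p =
      (z.1 + (M 0 0 * p.1 + M 0 1 * p.2), z.2 + (M 1 0 * p.1 + M 1 1 * p.2)) := by
  have h := Matrix.toLin_finTwoProd_apply (M 0 0) (M 0 1) (M 1 0) (M 1 1) p
  rw [← Matrix.eta_fin_two M] at h
  exact congrArg (z + ·) h

theorem volume_real_preimage_planeAffine (z : ℝ × ℝ) (S : Set (ℝ × ℝ)) :
    volume.real (planeAffine M hM z ⁻¹' S) = |M.det|⁻¹ * volume.real S := by
  have hlin : planeAffine M hM z ⁻¹' S =
      Matrix.toLin (Module.Basis.finTwoProd ℝ) (Module.Basis.finTwoProd ℝ) M ⁻¹'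
        ((z + ·) ⁻¹' S) := rfl
  have hdet := LinearMap.det_toLin (Module.Basis.finTwoProd ℝ) M
  rw [Measure.real, hlin, Measure.addHaar_preimage_linearMap volume (hdet ▸ hM.ne_zero), hdet,
    measure_preimage_add, ENNReal.toReal_mul, ENNReal.toReal_ofReal (abs_nonneg _), abs_inv]
  rfl

theorem planePolar_preimage_add_eq (hM' : IsUnit M.transpose.det) (z : ℝ × ℝ) (K : Set (ℝ × ℝ)) :
    planePolar ((z + ·) ⁻¹' K) =
      planeAffine M.transpose hM' 0 ⁻¹' planePolar (planeAffine M hM z ⁻¹' K) := by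
  ext q
  have hlin (p : ℝ × ℝ) : planeAffine M hM z p = z + planeAffine M hM 0 p := by
    ext <;> simp [planeAffine_apply]
  have hpair (p : ℝ × ℝ) : (planeAffine M hM 0 p).1 * q.1 + (planeAffine M hM 0 p).2 * q.2 =
      p.1 * (planeAffine M.transpose hM' 0 q).1 + p.2 * (planeAffine M.transpose hM' 0 q).2 := by
    simp only [planeAffine_apply, Matrix.transpose_apply, Prod.fst_zero, Prod.snd_zero]
    ring
  simp only [planePolar, mem_preimage, mem_ofPred_eq, hlin, ← hpair]
  exact (planeAffine M hM 0).surjective.forall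

theorem volume_real_mul_planePolar_preimage_planeAffine (z : ℝ × ℝ) (K : Set (ℝ × ℝ)) :
    volume.real (planeAffine M hM z ⁻¹' K) *
        volume.real (planePolar (planeAffine M hM z ⁻¹' K)) =
      volume.real K * volume.real (planePolar ((z + ·) ⁻¹' K)) := by
  have hM' : IsUnit M.transpose.det := M.det_transpose.symm ▸ hM
  rw [planePolar_preimage_add_eq (hM := hM) hM', volume_real_preimage_planeAffine,
    volume_real_preimage_planeAffine, M.det_transpose]
  ring

end PlaneAffine

/-- Each half-plane bounded by a line through the origin contains an open quadrant, so a convex set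
of positive area in every quadrant cannot be supported at the origin. -/
theorem mem_nhds_zero_of_volume_inter_signedQuadrant_pos {C : Set (ℝ × ℝ)} (hcv : Convex ℝ C)
    (hA : ∀ σ τ : ℝ, IsSign σ → IsSign τ → 0 < volume (C ∩ signedQuadrant σ τ)) :
    C ∈ 𝓝 (0 : ℝ × ℝ) := by
  rw [← mem_interior_iff_mem_nhds]
  by_contra h0
  obtain ⟨f, hf⟩ := geometric_hahn_banach_open_point hcv.interior isOpen_interior h0
  rw [map_zero] at hf
  have hf_apply (p : ℝ × ℝ) : f p = p.1 * f (1, 0) + p.2 * f (0, 1) := by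
    conv_lhs => rw [show p = p.1 • ((1, 0) : ℝ × ℝ) + p.2 • ((0, 1) : ℝ × ℝ) by ext <;> simp]
    simp only [map_add, map_smul, smul_eq_mul]
  obtain ⟨σ, hσ, hσ0⟩ := exists_isSign_mul_nonneg (f (1, 0))
  obtain ⟨τ, hτ, hτ0⟩ := exists_isSign_mul_nonneg (f (0, 1))
  have hsub : C ∩ signedQuadrant σ τ ⊆ frontier C := by
    rintro p ⟨hpC, hp1, hp2⟩
    refine ⟨subset_closure hpC, fun hpi => (hf p hpi).not_ge ?_⟩
    calc 0 ≤ σ * p.1 * (σ * f (1, 0)) + τ * p.2 * (τ * f (0, 1)) := by positivity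
      _ = σ * σ * (p.1 * f (1, 0)) + τ * τ * (p.2 * f (0, 1)) := by ring
      _ = p.1 * f (1, 0) + p.2 * f (0, 1) := by
        rw [hσ.mul_self, hτ.mul_self, one_mul, one_mul]
      _ = f p := (hf_apply p).symm
  exact (hA σ τ hσ hτ).ne' (measure_mono_null hsub (hcv.addHaar_frontier volume))

theorem exists_planeAffine_volume_inter_signedQuadrant {K : Set (ℝ × ℝ)} (hK : IsCompact K)
    (hcv : Convex ℝ K) (hne : (interior K).Nonempty) :
    ∃ (M : Matrix (Fin 2) (Fin 2) ℝ) (hM : IsUnit M.det) (z : ℝ × ℝ),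
      volume.real (planeAffine M hM z ⁻¹' K) = π ∧ ∀ σ τ : ℝ, IsSign σ → IsSign τ →
        volume.real (planeAffine M hM z ⁻¹' K ∩ signedQuadrant σ τ) = π / 4 := by
  have hV : 0 < volume.real K := ENNReal.toReal_pos
    (Measure.measure_pos_of_nonempty_interior volume hne).ne' hK.measure_lt_top.ne
  obtain ⟨a, b, m, hq⟩ := exists_quartering hK hcv hne
  obtain ⟨r, hr, hr2⟩ : ∃ r : ℝ, 0 < r ∧ r ^ 2 = volume.real K / π :=
    ⟨√(volume.real K / π), by positivity, Real.sq_sqrt (by positivity)⟩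
  have hdet : (!![r, 0; r * m, r]).det = volume.real K / π := by
    rw [Matrix.det_fin_two_of, ← hr2]
    ring
  have hM : IsUnit (!![r, 0; r * m, r]).det := by
    rw [hdet]
    exact (by positivity : volume.real K / π ≠ 0).isUnit
  have hvol (S : Set (ℝ × ℝ)) : volume.real (planeAffine _ hM (a, b) ⁻¹' S) =
      π / volume.real K * volume.real S := by
    rw [volume_real_preimage_planeAffine, hdet, abs_of_pos (by positivity), inv_div]
  refine ⟨_, hM, (a, b), by rw [hvol, div_mul_cancel₀ _ hV.ne'], fun σ τ hσ hτ => ?_⟩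
  have hquad : signedQuadrant σ τ = planeAffine _ hM (a, b) ⁻¹'
      ({p | 0 < σ * (p.1 - a)} ∩ {p | 0 < τ * (heightAt a m p - b)}) := by
    ext p
    have hfst : σ * ((planeAffine _ hM (a, b) p).1 - a) = r * (σ * p.1) := by
      simp [planeAffine_apply]
      ring
    have hheight : τ * (heightAt a m (planeAffine _ hM (a, b) p) - b) = r * (τ * p.2) := by
      simp [planeAffine_apply, heightAt]
      ring
    simp only [mem_preimage, mem_inter_iff, mem_ofPred_eq, hfst, hheight,
      mul_pos_iff_of_pos_left hr]
    rfl
  rw [hquad, ← preimage_inter, hvol, ← inter_assoc, hq σ τ hσ hτ]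
  field_simp

/-! ### Sandwiching between concentric ellipses -/

/-- `K` lies between an ellipse and its dilate by the factor `lam` about the centre. The ellipse is
encoded by an affine equivalence carrying it to the unit disc. -/
def BetweenEllipses {F : Type*} [AddCommGroup F] [Module ℝ F] (lam : ℝ) (K : Set F) : Prop :=
  ∃ e : F ≃ᵃ[ℝ] E2, (∀ p, ‖e p‖ ≤ 1 → p ∈ K) ∧ ∀ p ∈ K, ‖e p‖ ≤ lam

namespace BetweenEllipses

variable {F G : Type*} [AddCommGroup F] [Module ℝ F] [AddCommGroup G] [Module ℝ G]
  {lam : ℝ} {K : Set F}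

theorem mono {lam' : ℝ} (h : BetweenEllipses lam K) (hlam : lam ≤ lam') :
    BetweenEllipses lam' K :=
  let ⟨e, hin, hout⟩ := h
  ⟨e, hin, fun p hp => (hout p hp).trans hlam⟩

theorem of_preimage (f : G ≃ᵃ[ℝ] F) (h : BetweenEllipses lam (f ⁻¹' K)) :
    BetweenEllipses lam K := by
  obtain ⟨e, hin, hout⟩ := h
  refine ⟨f.symm.trans e, fun p hp => ?_, fun p hp => hout _ ?_⟩
  · simpa using hin _ hp
  · simpa using hp

theorem of_norm_le (e : F ≃ᵃ[ℝ] E2) {s t : ℝ} (hs : 0 < s) (hin : ∀ p, ‖e p‖ ≤ s → p ∈ K)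
    (hout : ∀ p ∈ K, ‖e p‖ ≤ t) : BetweenEllipses (t / s) K := by
  let dilate := (LinearEquiv.smulOfNeZero ℝ E2 s⁻¹ (inv_ne_zero hs.ne')).toAffineEquiv
  have hnorm (p : F) : ‖(e.trans dilate) p‖ = ‖e p‖ / s := by
    rw [AffineEquiv.trans_apply, div_eq_inv_mul]
    exact norm_smul_of_nonneg (inv_nonneg.2 hs.le) _
  refine ⟨e.trans dilate, fun p hp => hin p ?_, fun p hp => ?_⟩
  · rwa [hnorm, div_le_one hs] at hp
  · rw [hnorm]
    exact div_le_div_of_nonneg_right (hout p hp) hs.le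

theorem exists_linearMap {K : Set E2} (hlam : 0 < lam) (h : BetweenEllipses lam K) :
    ∃ (T : E2 →ₗ[ℝ] E2) (a : E2), Function.Bijective T ∧
      (fun x => T x + a) '' Metric.closedBall (0 : E2) 1 ⊆ K ∧
      K ⊆ (fun x => lam • T x + a) '' Metric.closedBall (0 : E2) 1 := by
  obtain ⟨e, hin, hout⟩ := h
  have hsymm (x : E2) : e.symm x = e.linear.symm x + e.symm 0 := by
    simpa using e.symm.map_vadd 0 x
  refine ⟨e.linear.symm, e.symm 0, e.linear.symm.bijective, ?_, fun y hy => ?_⟩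
  · rintro _ ⟨x, hx, rfl⟩
    refine hin _ ?_
    simpa [← hsymm] using hx
  · refine ⟨lam⁻¹ • e y, ?_, ?_⟩
    · rw [mem_closedBall_zero_iff, norm_smul_of_nonneg (inv_nonneg.2 hlam.le), inv_mul_le_iff₀ hlam,
        mul_one]
      exact hout y hy
    · simp only [map_smul, LinearEquiv.coe_coe, smul_inv_smul₀ hlam.ne', ← hsymm,
        AffineEquiv.symm_apply_apply]

end BetweenEllipses

/-- The coordinate identification of the Euclidean plane with `ℝ × ℝ`. -/
def planeCoord : E2 ≃L[ℝ] ℝ × ℝ :=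
  (EuclideanSpace.equiv (Fin 2) ℝ).trans (ContinuousLinearEquiv.finTwoArrow ℝ ℝ)

theorem planeCoord_apply (v : E2) : planeCoord v = (v 0, v 1) := rfl

theorem norm_planeCoord_symm (p : ℝ × ℝ) : ‖planeCoord.symm p‖ = √(p.1 ^ 2 + p.2 ^ 2) := by
  obtain ⟨v, rfl⟩ := planeCoord.surjective p
  rw [ContinuousLinearEquiv.symm_apply_apply, EuclideanSpace.norm_eq, Fin.sum_univ_two,
    planeCoord_apply, Real.norm_eq_abs, Real.norm_eq_abs, sq_abs, sq_abs]

theorem inner_planeCoord_symm (p q : ℝ × ℝ) :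
    ⟪planeCoord.symm p, planeCoord.symm q⟫ = p.1 * q.1 + p.2 * q.2 := by
  obtain ⟨v, rfl⟩ := planeCoord.surjective p
  obtain ⟨w, rfl⟩ := planeCoord.surjective q
  rw [ContinuousLinearEquiv.symm_apply_apply, ContinuousLinearEquiv.symm_apply_apply]
  simp only [planeCoord_apply, PiLp.inner_apply, Fin.sum_univ_two, RCLike.inner_apply,
    conj_trivial, mul_comm]

theorem volume_preimage_planeCoord_symm (S : Set E2) :
    volume (planeCoord.symm ⁻¹' S) = volume S := by
  have hpres : MeasurePreserving (planeCoord : E2 → ℝ × ℝ) volume volume :=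
    (volume_preserving_finTwoArrow ℝ).comp (PiLp.volume_preserving_ofLp (Fin 2))
  rw [← hpres.measure_preimage_equiv (f := planeCoord.toHomeomorph.toMeasurableEquiv)
    (planeCoord.symm ⁻¹' S)]
  congr 1
  ext v
  simp

theorem preimage_translatePolar_planeCoord_symm (K : Set E2) (z : ℝ × ℝ) :
    planeCoord.symm ⁻¹' translatePolar K (planeCoord.symm z) =
      planePolar ((z + ·) ⁻¹' (planeCoord.symm ⁻¹' K)) := by
  ext q
  simp only [translatePolar, planePolar, mem_preimage, mem_ofPred_eq, ← inner_planeCoord_symm]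
  refine ⟨fun h p hp => ?_, fun h x hx => ?_⟩
  · simpa using h _ hp
  · simpa using h (planeCoord x - z) (by simpa using hx)

theorem exists_affineEquiv_norm_eq_ellNorm {ρ : ℝ} (hρ : 0 < ρ) :
    ∃ e : (ℝ × ℝ) ≃ᵃ[ℝ] E2, ∀ p, ‖e p‖ = ellNorm ρ p.1 p.2 := by
  have hdet : (!![1 / √ρ, 0; 0, √ρ]).det = 1 := by
    rw [Matrix.det_fin_two_of]
    field_simp
    ring
  refine ⟨(planeAffine _ (hdet ▸ isUnit_one) 0).trans
    planeCoord.symm.toLinearEquiv.toAffineEquiv, fun p => ?_⟩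
  have hnorm := norm_planeCoord_symm (planeAffine _ (hdet ▸ isUnit_one) 0 p)
  refine hnorm.trans (congrArg Real.sqrt ?_)
  simp [planeAffine_apply, mul_pow, Real.sq_sqrt hρ.le, div_eq_inv_mul]

/-- Twice the signed area of the triangle with vertices `P`, `Q`, `R`. -/
def triangleDet (P Q R : ℝ × ℝ) : ℝ :=
  (Q.1 - P.1) * (R.2 - P.2) - (Q.2 - P.2) * (R.1 - P.1)

theorem exists_maximal_triangle {K : Set (ℝ × ℝ)} (hK : IsCompact K) (hne : (interior K).Nonempty) :
    ∃ P ∈ K, ∃ Q ∈ K, ∃ R ∈ K, 0 < triangleDet P Q R ∧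
      ∀ A ∈ K, ∀ B ∈ K, ∀ C ∈ K, |triangleDet A B C| ≤ triangleDet P Q R := by
  obtain ⟨p, hp⟩ := hne
  have hpK := interior_subset hp
  obtain ⟨⟨P, Q, R⟩, ⟨hP, hQ, hR⟩, hmax⟩ := (hK.prod (hK.prod hK)).exists_isMaxOn
    ⟨(p, p, p), hpK, hpK, hpK⟩ (f := fun t => triangleDet t.1 t.2.1 t.2.2)
    (by unfold triangleDet; fun_prop)
  have hle {A B C : ℝ × ℝ} (hA : A ∈ K) (hB : B ∈ K) (hC : C ∈ K) :
      triangleDet A B C ≤ triangleDet P Q R :=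
    hmax (show (A, B, C) ∈ K ×ˢ K ×ˢ K from ⟨hA, hB, hC⟩)
  refine ⟨P, hP, Q, hQ, R, hR, ?_, fun A hA B hB C hC => abs_le'.2 ⟨hle hA hB hC, ?_⟩⟩
  · obtain ⟨r, hr, hb⟩ := Metric.nhds_basis_closedBall.mem_iff.1 (mem_interior_iff_mem_nhds.1 hp)
    have hright : (p.1 + r, p.2) ∈ K := hb (by simp [Prod.dist_eq, abs_of_pos hr, hr.le])
    have hup : (p.1, p.2 + r) ∈ K := hb (by simp [Prod.dist_eq, abs_of_pos hr, hr.le])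
    calc 0 < r * r := mul_pos hr hr
      _ = triangleDet p (p.1 + r, p.2) (p.1, p.2 + r) := by simp [triangleDet]
      _ ≤ _ := hle hpK hright hup
  · calc -triangleDet A B C = triangleDet A C B := by unfold triangleDet; ring
      _ ≤ _ := hle hA hC hB

/-- The ellipses are the discs of radii `1/6` and `2` about the centroid `(1/3, 1/3)` of the
triangle. -/
theorem betweenEllipses_of_triangle_subset {C : Set (ℝ × ℝ)}
    (hin : ∀ p : ℝ × ℝ, 0 ≤ p.1 → 0 ≤ p.2 → p.1 + p.2 ≤ 1 → p ∈ C)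
    (hout : ∀ p ∈ C, |p.1| ≤ 1 ∧ |p.2| ≤ 1) : BetweenEllipses 12 C := by
  let e : (ℝ × ℝ) ≃ᵃ[ℝ] E2 := (AffineEquiv.constVAdd ℝ (ℝ × ℝ) (-(1 / 3, 1 / 3))).trans
    planeCoord.symm.toLinearEquiv.toAffineEquiv
  have hnorm (p : ℝ × ℝ) : ‖e p‖ = √((-(1 / 3) + p.1) ^ 2 + (-(1 / 3) + p.2) ^ 2) :=
    norm_planeCoord_symm _
  rw [show (12 : ℝ) = 2 / (1 / 6) by norm_num]
  refine .of_norm_le e (by norm_num) (fun p hp => ?_) fun p hp => ?_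
  · rw [hnorm, Real.sqrt_le_left (by norm_num)] at hp
    have h1 := sq_nonneg (-(1 / 3) + p.1)
    have h2 := sq_nonneg (-(1 / 3) + p.2)
    have hx := abs_le_of_sq_le_sq' (a := -(1 / 3) + p.1) (b := 1 / 6) (by linarith) (by norm_num)
    have hy := abs_le_of_sq_le_sq' (a := -(1 / 3) + p.2) (b := 1 / 6) (by linarith) (by norm_num)
    exact hin p (by linarith) (by linarith) (by linarith)
  · obtain ⟨hx, hy⟩ := hout p hp
    rw [abs_le] at hx hy
    rw [hnorm, Real.sqrt_le_left (by norm_num)]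
    nlinarith

/-- In the affine coordinates of a triangle of maximal area in `K`, the body `K` contains the
standard triangle and lies in `[-1, 1]²`. -/
theorem betweenEllipses_twelve {K : Set (ℝ × ℝ)} (hK : IsCompact K) (hcv : Convex ℝ K)
    (hne : (interior K).Nonempty) : BetweenEllipses 12 K := by
  obtain ⟨P, hP, Q, hQ, R, hR, hpos, hmax⟩ := exists_maximal_triangle hK hne
  have hdet : IsUnit (!![Q.1 - P.1, R.1 - P.1; Q.2 - P.2, R.2 - P.2]).det := by
    rw [Matrix.det_fin_two_of, mul_comm (R.1 - P.1)]
    exact hpos.ne'.isUnit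
  let f := planeAffine _ hdet P
  have hf (p : ℝ × ℝ) : f p = (1 - p.1 - p.2) • P + p.1 • Q + p.2 • R := by
    ext <;> simp [f, planeAffine_apply] <;> ring
  have hle_one {t : ℝ} (ht : |t * triangleDet P Q R| ≤ triangleDet P Q R) : |t| ≤ 1 := by
    rw [abs_mul, abs_of_pos hpos] at ht
    exact (mul_le_iff_le_one_left hpos).1 ht
  refine .of_preimage f (betweenEllipses_of_triangle_subset (fun p h1 h2 h => ?_) fun p hp => ?_)
  · have hsum := hcv.sum_mem (t := Finset.univ) (w := ![1 - p.1 - p.2, p.1, p.2])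
      (z := ![P, Q, R]) (by simpa [Fin.forall_fin_succ, h1, h2] using by linarith)
      (by simp [Fin.sum_univ_three, sub_sub, add_assoc]) (by simp [Fin.forall_fin_succ, hP, hQ, hR])
    rw [mem_preimage, hf]
    simpa [Fin.sum_univ_three] using hsum
  · have hfst : triangleDet P (f p) R = p.1 * triangleDet P Q R := by
      simp [hf, triangleDet]
      ring
    have hsnd : triangleDet P Q (f p) = p.2 * triangleDet P Q R := by
      simp [hf, triangleDet]
      ring
    exact ⟨hle_one (hfst ▸ hmax P hP _ hp R hR), hle_one (hsnd ▸ hmax P hP Q hQ _ hp)⟩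

/-- Here `1 / ((1 - 8 * Δ) * (1 - 14 * Δ) ^ 2)` and `(1 - 14 * Δ) ^ 2 / (1 + 6 * Δ)` are the outer
and inner radii of `exists_ellNorm_of_quartered`. -/
theorem dilation_ratio_lt {Δ : ℝ} (hΔ : 0 < Δ) (hΔ1 : Δ ≤ 11 / 1680) :
    1 / ((1 - 8 * Δ) * (1 - 14 * Δ) ^ 2) / ((1 - 14 * Δ) ^ 2 / (1 + 6 * Δ)) < 1 + 1680 * Δ := by
  have h8 : 0 < 1 - 8 * Δ := by linarith
  have h14 : 0 < 1 - 14 * Δ := by linarith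
  have hbern : 1 - 56 * Δ ≤ (1 - 14 * Δ) ^ 4 := by
    have := one_add_mul_le_pow (a := -(14 * Δ)) (by linarith) 4
    push_cast at this
    rw [← sub_eq_add_neg] at this
    linarith
  have hprod : 1 - 64 * Δ ≤ (1 - 8 * Δ) * (1 - 14 * Δ) ^ 4 := by nlinarith
  calc 1 / ((1 - 8 * Δ) * (1 - 14 * Δ) ^ 2) / ((1 - 14 * Δ) ^ 2 / (1 + 6 * Δ))
      = (1 + 6 * Δ) / ((1 - 8 * Δ) * (1 - 14 * Δ) ^ 4) := by field_simp
    _ < 1 + 1680 * Δ := by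
      rw [div_lt_iff₀ (by positivity)]
      nlinarith

/-- With `δ = (ε ^ 3 / 10 ^ 11) ^ 2`, the condition on `√δ` in `exists_ellNorm_of_quartered` holds
for `Δ = ε / 1680`. -/
theorem exists_betweenEllipses_of_quartered {C : Set (ℝ × ℝ)} (hC : IsCompact C)
    (hcv : Convex ℝ C) (h0 : C ∈ 𝓝 (0 : ℝ × ℝ))
    (hA : ∀ σ τ : ℝ, IsSign σ → IsSign τ → volume.real (C ∩ signedQuadrant σ τ) = π / 4)
    {ε : ℝ} (hε : 0 < ε) (hε11 : ε ≤ 11)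
    (hvol : π * (1 - (ε ^ 3 / 10 ^ 11) ^ 2) ≤ volume.real (planePolar C)) :
    ∃ lam < 1 + ε, BetweenEllipses lam C := by
  have hε2 : ε ^ 2 ≤ 11 ^ 2 := pow_le_pow_left₀ hε.le hε11 2
  have hε3 : ε ^ 3 ≤ 11 * ε ^ 2 := by
    rw [pow_succ' ε 2]
    gcongr
  obtain ⟨ρ, hρ, h⟩ := exists_ellNorm_of_quartered (Δ := ε / 1680) hC hcv h0
    (fun σ τ hσ hτ => by
      rw [← hA σ τ hσ hτ,
        ofReal_measureReal (measure_ne_top_of_subset inter_subset_left hC.measure_lt_top.ne)])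
    (by positivity) (pow_le_one₀ (by positivity) (by linarith)) hvol (by positivity)
    (by linarith) (by
      rw [Real.sqrt_sq (by positivity)]
      nlinarith [sq_pos_of_pos hε])
  obtain ⟨e, he⟩ := exists_affineEquiv_norm_eq_ellNorm hρ
  have h8 : 0 < 1 - 8 * (ε / 1680) := by linarith
  have h14 : 0 < 1 - 14 * (ε / 1680) := by linarith
  refine ⟨_, ?_, .of_norm_le e (s := (1 - 14 * (ε / 1680)) ^ 2 / (1 + 6 * (ε / 1680)))
    (t := 1 / ((1 - 8 * (ε / 1680)) * (1 - 14 * (ε / 1680)) ^ 2)) (by positivity)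
    (fun p hp => (h p).1 ?_) fun p hp => ?_⟩
  · linarith [dilation_ratio_lt (Δ := ε / 1680) (by positivity) (by linarith)]
  · rwa [he, le_div_iff₀' (by positivity)] at hp
  · rw [he, le_div_iff₀' (by positivity)]
    exact (h p).2 hp

/-! ### Stability with respect to the quartering centre -/

theorem exists_center_betweenEllipses_plane {K : Set (ℝ × ℝ)} (hK : IsCompact K)
    (hcv : Convex ℝ K) (hne : (interior K).Nonempty) :
    ∃ z ∈ interior K, ∀ ε : ℝ, 0 < ε →
      π ^ 2 * (1 - (ε ^ 3 / 10 ^ 11) ^ 2) ≤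
        volume.real K * volume.real (planePolar ((z + ·) ⁻¹' K)) →
      ∃ lam < 1 + ε, BetweenEllipses lam K := by
  obtain ⟨M, hM, z, hvolC, hquad⟩ := exists_planeAffine_volume_inter_signedQuadrant hK hcv hne
  let f := (planeAffine M hM z).toContinuousAffineEquiv.toHomeomorph
  have hC : IsCompact (planeAffine M hM z ⁻¹' K) := f.isClosedEmbedding.isCompact_preimage hK
  have hCcv : Convex ℝ (planeAffine M hM z ⁻¹' K) :=
    hcv.affine_preimage (planeAffine M hM z).toAffineMap
  have hC0 : planeAffine M hM z ⁻¹' K ∈ 𝓝 (0 : ℝ × ℝ) :=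
    mem_nhds_zero_of_volume_inter_signedQuadrant_pos hCcv fun σ τ hσ hτ =>
      (ENNReal.toReal_pos_iff.1 ((div_pos Real.pi_pos four_pos).trans_eq
        (hquad σ τ hσ hτ).symm)).1
  have hz : planeAffine M hM z 0 ∈ interior K := by
    rw [← mem_interior_iff_mem_nhds] at hC0
    exact (f.preimage_interior K).ge hC0
  rw [show planeAffine M hM z 0 = z by simp [planeAffine_apply]] at hz
  refine ⟨z, hz, fun ε hε hvol => ?_⟩
  rcases le_or_gt ε 11 with hε11 | hε11
  · rw [← volume_real_mul_planePolar_preimage_planeAffine (hM := hM), hvolC, sq, mul_assoc] at hvol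
    obtain ⟨lam, hlam, h⟩ := exists_betweenEllipses_of_quartered hC hCcv hC0 hquad hε hε11
      (le_of_mul_le_mul_left hvol Real.pi_pos)
    exact ⟨lam, hlam, h.of_preimage⟩
  · exact ⟨12, by linarith, betweenEllipses_twelve hK hcv hne⟩

theorem exists_center_betweenEllipses {K : Set E2} (hK : IsCompact K) (hcv : Convex ℝ K)
    (hne : (interior K).Nonempty) :
    ∃ z ∈ interior K, ∀ ε : ℝ, 0 < ε →
      ENNReal.ofReal (π ^ 2 * (1 - (ε ^ 3 / 10 ^ 11) ^ 2)) ≤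
        volume K * volume (translatePolar K z) →
      ∃ lam < 1 + ε, BetweenEllipses lam K := by
  have hKcoord : IsCompact (planeCoord.symm ⁻¹' K) :=
    planeCoord.symm.toHomeomorph.isClosedEmbedding.isCompact_preimage hK
  have hcvcoord : Convex ℝ (planeCoord.symm ⁻¹' K) :=
    hcv.linear_preimage planeCoord.symm.toLinearEquiv.toLinearMap
  have hinterior : planeCoord.symm ⁻¹' interior K = interior (planeCoord.symm ⁻¹' K) :=
    planeCoord.symm.toHomeomorph.preimage_interior K
  obtain ⟨z, hz, hstab⟩ := exists_center_betweenEllipses_plane hKcoord hcvcoord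
    (hinterior ▸ hne.preimage planeCoord.symm.surjective)
  have hnhds : (z + ·) ⁻¹' (planeCoord.symm ⁻¹' K) ∈ 𝓝 (0 : ℝ × ℝ) :=
    (continuous_const_add z).continuousAt.preimage_mem_nhds
      (by rwa [add_zero, ← mem_interior_iff_mem_nhds])
  refine ⟨planeCoord.symm z, hinterior.ge hz, fun ε hε hvol => ?_⟩
  rw [← volume_preimage_planeCoord_symm K, ← volume_preimage_planeCoord_symm (translatePolar K _),
    preimage_translatePolar_planeCoord_symm, ENNReal.ofReal_le_iff_le_toReal (ENNReal.mul_ne_top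
      hKcoord.measure_lt_top.ne (isCompact_planePolar hnhds).measure_lt_top.ne),
    ENNReal.toReal_mul] at hvol
  obtain ⟨lam, hlam, h⟩ := hstab ε hε hvol
  exact ⟨lam, hlam, h.of_preimage planeCoord.symm.toLinearEquiv.toAffineEquiv⟩

end

/-- Stability of the planar Blaschke–Santaló inequality: if the Banach–Mazur distance
of K from the ellipses is at least 1 + ε, then V(K)·V((K − s(K))*) ≤ π²(1 − c·ε⁶). -/
theorem blaschke_santalo_stability :
    ∃ c : ℝ, 0 < c ∧
      ∀ (K : Set E2), IsCompact K → Convex ℝ K → (interior K).Nonempty →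
      ∀ s : E2, IsSantaloPoint K s →
      ∀ ε : ℝ, 0 < ε →
      (¬ ∃ (T : E2 →ₗ[ℝ] E2) (a : E2) (lam : ℝ), Function.Bijective T ∧
          1 ≤ lam ∧ lam < 1 + ε ∧
          (fun x => T x + a) '' Metric.closedBall (0 : E2) 1 ⊆ K ∧
          K ⊆ (fun x => lam • T x + a) '' Metric.closedBall (0 : E2) 1) →
      volume K * volume (translatePolar K s) ≤
        ENNReal.ofReal (π ^ 2 * (1 - c * ε ^ 6)) := by
  refine ⟨(1 / 10 ^ 11) ^ 2, by positivity, fun K hK hcv hne s hs ε hε hfar => ?_⟩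
  obtain ⟨z, hz, hstab⟩ := exists_center_betweenEllipses hK hcv hne
  by_contra! hlt
  obtain ⟨lam, hlam, hbetween⟩ := hstab ε hε <| calc
    ENNReal.ofReal (π ^ 2 * (1 - (ε ^ 3 / 10 ^ 11) ^ 2))
      = ENNReal.ofReal (π ^ 2 * (1 - (1 / 10 ^ 11) ^ 2 * ε ^ 6)) := by ring_nf
    _ ≤ volume K * volume (translatePolar K s) := hlt.le
    _ ≤ volume K * volume (translatePolar K z) := mul_le_mul_right (hs.2 z hz) _
  obtain ⟨T, a, hT, hin, hout⟩ := (hbetween.mono (le_max_right 1 lam)).exists_linearMap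
    (zero_lt_one.trans_le (le_max_left 1 lam))
  exact hfar ⟨T, a, max 1 lam, hT, le_max_left 1 lam, max_lt (by linarith) hlam, hin, hout⟩
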